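/- arXiv:1510.01605 — 3 statements merged into one kernel-verified Lean document; each statement's English description precedes it below -/
import Mathlib

section
/- Let k, D ≥ 1 and let (X,T) be a ℤ^k-system with the marker property satisfying mdim(X) < D/2^{k+1}. Then the set of continuous maps f: X → [0,1]^{2D} for which the map I_f: X → ([0,1]^{2D})^{ℤ^k}, x ↦ (f(T^n x))_{n∈ℤ^k}, is a topological embedding is a dense G_δ subset of C(X,[0,1]^{2D}) with the uniform topology. -/
/-!
The embedding functions are the intersection over `m` of the sets `epsSeparating T (1 / (m + 1))` of
functions whose orbit maps have small fibers. Each of these is open because `X` is compact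
(`isOpen_epsSeparating`), so by Baire's theorem it suffices to show that `epsSeparating T ε` is dense
for every `ε > 0`. To perturb a given map, split its `2 D` coordinates into two blocks of `D`
coordinates; the first block encodes the positions of markers along the orbit, and the second block
encodes the orbit itself, in pieces assigned to the markers (`exists_pair_perturbation`).

*First block* (`exists_marker_perturbation`). Since `mdim X < D / 2 ^ (k + 1)`, some block `[N]^k`
admits an `ε`-embedding into a complex of dimension `d` with `2 ^ (k + 1) d < D N ^ k`
(`exists_hasBlockMap`). In a window `[2 M]^k`, with `M` a multiple of `N`, the values of the map thus
range over a set of dimension at most `(2 M / N) ^ k d < D M ^ k / 2`. As two overlapping windows,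
shifted by at most `M` against each other, have at least `M ^ k` points in common, a general
perturbation makes the pattern of a window differ on the overlap from every shifted pattern of a
window (`exists_vector_no_shift`). Writing such patterns at the return times to the marker set yields
a map whose itineraries determine a function `Ψ` that marks sparse but relatively dense times.

*Second block* (`exists_code`). By general position, with `ρ = q N` and `s = q / (q + 1)`, the
values on a cube of side `q N` can be made to determine the orbit up to `ε` on a cube of side
`(q + 1) N`. Laying out such cubes on a grid gives a code in which the orbit near time `v` is read off
from the positions within `ρ` of `s v`. Here only a factor `4` is needed in the dimension bound, which
leaves room for `s < 1` close to `1`.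

*Assembly.* The points of `ℤ^k` are distributed among the markers according to the weighted Voronoi
diagram with cost `|n| ^ 2 + C₁ (1 - ψ n)`. Let `n` be nearest to the origin. Since `s < 1`, the points
within `ρ` of `(1 - s) n`, where the code word of the marker `n` describing the time `0` is written,
are strictly closer to `n` than to any other marker, with a uniform gap (`gap_of_nearest`). Hence the
code can be switched on continuously, with weight exactly `1` where it is needed, and two points with
the same itinerary are at distance less than `ε`.
-/

open Set Filter
open scoped NNReal ENNReal Topology

/-- A continuous action of `ℤ^k` on a topological space. -/
structure IsZkAction {k : ℕ} {X : Type*} [TopologicalSpace X]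
    (T : (Fin k → ℤ) → X → X) : Prop where
  cont : ∀ n, Continuous (T n)
  map_zero : ∀ x, T 0 x = x
  map_add : ∀ m n x, T (m + n) x = T m (T n x)

/-- The marker property for a `ℤ^k`-action. -/
def MarkerProperty {k : ℕ} {X : Type*} [TopologicalSpace X]
    (T : (Fin k → ℤ) → X → X) : Prop :=
  ∀ F : Finset (Fin k → ℤ), ∃ U : Set X, IsOpen U ∧
    (⋃ n : Fin k → ℤ, T n '' U) = Set.univ ∧
    ∀ n ∈ F, n ≠ 0 → U ∩ T n '' U = ∅

/-- `f` is an `ε`-embedding with respect to the (pseudo-)distance `ρ`: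
every fiber of `f` has `ρ`-diameter `< ε`. -/
def IsEpsEmbedding {X Y : Type*} [TopologicalSpace X] [TopologicalSpace Y]
    (ρ : X → X → ℝ) (ε : ℝ) (f : X → Y) : Prop :=
  Continuous f ∧ ∀ x y, f x = f y → ρ x y < ε

/-- `widim_ε(X, ρ)`: the least `n` such that there is an `ε`-embedding of `X`
into a finite simplicial complex of dimension at most `n`. -/
noncomputable def widim (X : Type*) [TopologicalSpace X] (ρ : X → X → ℝ) (ε : ℝ) : ℕ :=
  sInf {n : ℕ | ∃ (m : ℕ) (P : Geometry.SimplicialComplex ℝ (EuclideanSpace ℝ (Fin m))),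
    P.faces.Finite ∧ (∀ s ∈ P.faces, s.card ≤ n + 1) ∧
    ∃ f : X → P.space, IsEpsEmbedding ρ ε f}

/-- The distance `ρ_{[N]}(x,y) = sup_{a ∈ {0,…,N-1}^k} ρ(T^a x, T^a y)`. -/
noncomputable def blockRho {k : ℕ} {X : Type*} (T : (Fin k → ℤ) → X → X)
    (ρ : X → X → ℝ) (N : ℕ) (x y : X) : ℝ :=
  ⨆ a : Fin k → Fin N, ρ (T (fun i => (a i : ℤ)) x) (T (fun i => (a i : ℤ)) y)

/-- Mean dimension of a `ℤ^k`-system: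
`mdim(X) = lim_{ε→0} lim_{N→∞} widim_ε(X, d_{[N]})/N^k`, where the limit in `N`
equals the infimum (subadditivity) and the limit in `ε` equals the supremum
(monotonicity). -/
noncomputable def mdim {k : ℕ} (X : Type*) [MetricSpace X]
    (T : (Fin k → ℤ) → X → X) : ℝ≥0∞ :=
  ⨆ (ε : ℝ) (_ : 0 < ε), ⨅ (N : ℕ) (_ : 1 ≤ N),
    (widim X (blockRho T dist N) ε : ℝ≥0∞) / (N : ℝ≥0∞) ^ k

/-! ### General position -/

/-- Arbitrarily small vectors of `F` avoid finitely many `C¹` images of spaces of smaller dimension, by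
the bound on the Hausdorff dimension of a `C¹` image. -/
theorem exists_small_notMem_range {ι : Type*} [Finite ι] {F : Type*} [NormedAddCommGroup F]
    [NormedSpace ℝ F] [FiniteDimensional ℝ F] {E : ι → Type*} [∀ i, NormedAddCommGroup (E i)]
    [∀ i, NormedSpace ℝ (E i)] [∀ i, FiniteDimensional ℝ (E i)] (Φ : ∀ i, E i → F)
    (hΦ : ∀ i, ContDiff ℝ 1 (Φ i))
    (hdim : ∀ i, Module.finrank ℝ (E i) < Module.finrank ℝ F) {η : ℝ} (hη : 0 < η) :
    ∃ a : F, ‖a‖ < η ∧ ∀ i e, Φ i e ≠ a := by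
  rcases isEmpty_or_nonempty ι with h | ⟨⟨i₀⟩⟩
  · exact ⟨0, by simpa using hη, fun i => h.elim i⟩
  · have hd : Dense (⋃ i, range (Φ i))ᶜ := by
      apply dense_compl_of_dimH_lt_finrank
      rw [dimH_iUnion]
      have h1 : (⨆ i, dimH (range (Φ i))) ≤ ((Module.finrank ℝ F - 1 : ℕ) : ℝ≥0∞) := by
        refine iSup_le fun i => (hΦ i).dimH_range_le.trans ?_
        have := hdim i
        exact_mod_cast (by omega : Module.finrank ℝ (E i) ≤ Module.finrank ℝ F - 1)
      refine h1.trans_lt ?_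
      have := hdim i₀
      exact_mod_cast (by omega : Module.finrank ℝ F - 1 < Module.finrank ℝ F)
    obtain ⟨a, ha, hb⟩ := hd.exists_mem_open Metric.isOpen_ball ⟨0, Metric.mem_ball_self hη⟩
    refine ⟨a, by simpa using hb, fun i e h => ha (mem_iUnion.2 ⟨i, e, h⟩)⟩

/-- General position: if `p` takes values in finitely many `C¹` images of `E` and `2 dim E + 1` is
less than the number of target coordinates, then a small linear perturbation `a` makes `h` injective
on the range of `p`. -/
theorem exists_matrix_injective {κ V I E X : Type*} [Fintype κ] [Fintype V] [Finite I]
    [NormedAddCommGroup E] [NormedSpace ℝ E] [FiniteDimensional ℝ E]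
    (p : X → κ → ℝ) (φ : I → E → κ → ℝ) (hφ : ∀ i, ContDiff ℝ 1 (φ i))
    (hp : ∀ x, ∃ i u, φ i u = p x) (h : (κ → ℝ) → V → ℝ) (hh : ContDiff ℝ 1 h)
    (hdim : 2 * Module.finrank ℝ E + 1 < Fintype.card V) {η : ℝ} (hη : 0 < η) :
    ∃ a : κ → V → ℝ, ‖a‖ < η ∧ ∀ x y,
      h (p x) + ∑ c, p x c • a c = h (p y) + ∑ c, p y c • a c → p x = p y := by
  classical
  -- If `p x` and `p y` differ in coordinate `c` and have the same image, then row `c` of `a` is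
  -- determined by the other rows, the parameters of `p x` and `p y`, and `(p x c - p y c)⁻¹`.
  let Φ : ∀ j : κ × I × I, (E × E × ℝ × ({c // c ≠ j.1} → V → ℝ)) → κ → V → ℝ :=
    fun j q c => if hc : c = j.1 then
      q.2.2.1 • (h (φ j.2.2 q.2.1) - h (φ j.2.1 q.1) -
        ∑ c' : {c // c ≠ j.1}, (φ j.2.1 q.1 c' - φ j.2.2 q.2.1 c') • q.2.2.2 c')
      else q.2.2.2 ⟨c, hc⟩
  have hΦ : ∀ j, ContDiff ℝ 1 (Φ j) := by
    intro j
    rw [contDiff_pi]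
    intro c
    by_cases hc : c = j.1
    · simp only [Φ, hc, dif_pos]
      have := hφ j.2.1
      have := hφ j.2.2
      have h3 : ∀ i : I, ∀ c, ContDiff ℝ 1 (fun u => φ i u c) := fun i c => (contDiff_pi.1 (hφ i)) c
      have h4 : ∀ c : κ, ContDiff ℝ 1 (fun q : E × E × ℝ × ({c // c ≠ j.1} → V → ℝ) =>
        φ j.2.1 q.1 c) := fun c => (h3 _ c).comp contDiff_fst
      have h5 : ∀ c : κ, ContDiff ℝ 1 (fun q : E × E × ℝ × ({c // c ≠ j.1} → V → ℝ) =>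
        φ j.2.2 q.2.1 c) := fun c => (h3 _ c).comp (by fun_prop)
      have h6 : ∀ c : {c // c ≠ j.1}, ContDiff ℝ 1 (fun q : E × E × ℝ × ({c // c ≠ j.1} → V → ℝ) =>
        q.2.2.2 c) := fun c => by fun_prop
      have h7 : ContDiff ℝ 1 (fun q : E × E × ℝ × ({c // c ≠ j.1} → V → ℝ) =>
        h (φ j.2.2 q.2.1) - h (φ j.2.1 q.1)) := by fun_prop
      have h8 : ContDiff ℝ 1 (fun q : E × E × ℝ × ({c // c ≠ j.1} → V → ℝ) => q.2.2.1) := by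
        fun_prop
      exact h8.smul (h7.sub (ContDiff.sum fun c' _ => ((h4 _).sub (h5 _)).smul (h6 c')))
    · simp only [Φ, hc, dif_neg, not_false_eq_true]
      fun_prop
  have hfin : ∀ j : κ × I × I, Module.finrank ℝ (E × E × ℝ × ({c // c ≠ j.1} → V → ℝ)) <
      Module.finrank ℝ (κ → V → ℝ) := by
    intro j
    have : Fintype.card {c // c ≠ j.1} = Fintype.card κ - 1 := by
      simp
    have h1 : 0 < Fintype.card κ := Fintype.card_pos_iff.2 ⟨j.1⟩
    simp only [Module.finrank_prod, Module.finrank_pi_fintype, Module.finrank_self, Finset.sum_const,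
      Finset.card_univ, smul_eq_mul, mul_one, this]
    obtain ⟨n, hn⟩ := Nat.exists_eq_succ_of_ne_zero h1.ne'
    rw [hn]
    simp only [Nat.succ_eq_add_one, Nat.add_sub_cancel]
    nlinarith
  obtain ⟨a, ha, hb⟩ := exists_small_notMem_range Φ hΦ hfin hη
  refine ⟨a, ha, fun x y hxy => ?_⟩
  by_contra hne
  obtain ⟨c, hc⟩ := Function.ne_iff.1 hne
  obtain ⟨i, u, hu⟩ := hp x
  obtain ⟨i', u', hu'⟩ := hp y
  refine hb (c, i, i') (u, u', (p x c - p y c)⁻¹, fun c' => a c') ?_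
  funext c₀
  by_cases h0 : c₀ = c
  · subst h0
    simp only [Φ, hu, hu', dif_pos]
    have hs : ∀ z : κ → ℝ, ∑ c, z c • a c = z c₀ • a c₀ + ∑ c' : {c // c ≠ c₀}, z c' • a c' := by
      intro z
      rw [Fintype.sum_eq_add_sum_subtype_ne _ c₀]
    rw [hs, hs] at hxy
    have hsub : p x c₀ - p y c₀ ≠ 0 := sub_ne_zero.2 hc
    rw [inv_smul_eq_iff₀ hsub]
    simp only [sub_smul, Finset.sum_sub_distrib]
    have : h (p y) = h (p x) + (p x c₀ • a c₀ + ∑ c' : {c // c ≠ c₀}, p x c' • a c') -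
      (p y c₀ • a c₀ + ∑ c' : {c // c ≠ c₀}, p y c' • a c') := by rw [hxy]; abel
    rw [this]; abel
  · simp [Φ, h0]

/-- A small vector `a` whose images under finitely many surjections `L j` avoid `C¹` images of spaces
of smaller dimension than the targets. -/
theorem exists_small_linear_ne {ι : Type*} [Finite ι] {F : Type*} [NormedAddCommGroup F]
    [NormedSpace ℝ F] [FiniteDimensional ℝ F] {E : Type*} [NormedAddCommGroup E]
    [NormedSpace ℝ E] [FiniteDimensional ℝ E] {B : ι → Type*} [∀ j, Fintype (B j)]
    (L : ∀ j, F →ₗ[ℝ] (B j → ℝ)) (hL : ∀ j, Function.Surjective (L j))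
    (Q : ∀ j, E → B j → ℝ) (hQ : ∀ j, ContDiff ℝ 1 (Q j))
    (hdim : ∀ j, Module.finrank ℝ E < Fintype.card (B j)) {η : ℝ} (hη : 0 < η) :
    ∃ a : F, ‖a‖ < η ∧ ∀ j e, L j a ≠ Q j e := by
  choose s hs using fun j => (L j).exists_rightInverse_of_surjective (LinearMap.range_eq_top.2 (hL j))
  let Φ : ∀ j, E × LinearMap.ker (L j) → F := fun j q => s j (Q j q.1) + q.2
  have hΦ : ∀ j, ContDiff ℝ 1 (Φ j) := by
    intro j
    have h1 : ContDiff ℝ 1 (s j) := (LinearMap.toContinuousLinearMap (s j)).contDiff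
    have h2 : ContDiff ℝ 1 (fun q : LinearMap.ker (L j) => (q : F)) :=
      (LinearMap.ker (L j)).subtypeL.contDiff
    have h3 := hQ j
    exact ((h1.comp (h3.comp contDiff_fst))).add (h2.comp contDiff_snd)
  have hfin : ∀ j, Module.finrank ℝ (E × LinearMap.ker (L j)) < Module.finrank ℝ F := by
    intro j
    have h1 := (L j).finrank_range_add_finrank_ker
    rw [LinearMap.range_eq_top.2 (hL j), finrank_top, Module.finrank_pi] at h1
    rw [Module.finrank_prod]
    have := hdim j
    omega
  obtain ⟨a, ha, hb⟩ := exists_small_notMem_range Φ hΦ hfin hη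
  refine ⟨a, ha, fun j e h => hb j (e, ⟨a - s j (Q j e), ?_⟩) ?_⟩
  · have := LinearMap.congr_fun (hs j) (Q j e)
    simp only [LinearMap.comp_apply, LinearMap.id_apply] at this
    simp [this, h]
  · simp [Φ]

/-- The discrete cube `{0, …, r - 1}^k`, as a finite subset of `ℤ^k`. -/
noncomputable def box (k r : ℕ) : Finset (Fin k → ℤ) := Fintype.piFinset fun _ => Finset.Ico (0 : ℤ) r

theorem mem_box {k r : ℕ} {i : Fin k → ℤ} : i ∈ box k r ↔ ∀ c, 0 ≤ i c ∧ i c < r := by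
  simp [box]

theorem card_box (k r : ℕ) : (box k r).card = r ^ k := by
  simp [box]

/-- The points `i` of the cube for which `i + j` is in the cube as well. -/
noncomputable def shiftBox (k r : ℕ) (j : Fin k → ℤ) : Finset (Fin k → ℤ) :=
  (box k r).filter fun i => i + j ∈ box k r

theorem le_card_shiftBox {k M : ℕ} {j : Fin k → ℤ} (hj : ∀ c, |j c| ≤ M) :
    M ^ k ≤ (shiftBox k (2 * M) j).card := by
  have h1 : (Fintype.piFinset fun c => Finset.Ico (max 0 (-j c)) (min (2 * M : ℤ) (2 * M - j c))) ⊆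
      shiftBox k (2 * M) j := by
    intro i hi
    simp only [Fintype.mem_piFinset, Finset.mem_Ico, max_le_iff, lt_min_iff] at hi
    simp only [shiftBox, Finset.mem_filter, mem_box, Pi.add_apply]
    refine ⟨fun c => ?_, fun c => ?_⟩ <;> have := hi c <;> push_cast <;> constructor <;> linarith
  refine le_trans ?_ (Finset.card_le_card h1)
  rw [Fintype.card_piFinset]
  calc M ^ k = ∏ _c : Fin k, M := by simp
    _ ≤ _ := Finset.prod_le_prod' fun c _ => by
      rw [Int.card_Ico]
      have := abs_le.1 (hj c)
      omega

/-- The operator `a ↦ (a (i + j) - a i)` is onto functions on `shiftBox k r j`: sum along the `j`-lines,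
which leave the cube after at most `r` steps. -/
theorem surjective_shift_sub {k r D : ℕ} {j : Fin k → ℤ} (hj : j ≠ 0)
    (b : shiftBox k r j → Fin D → ℝ) : ∃ a : (Fin k → ℤ) → Fin D → ℝ,
      ∀ i : shiftBox k r j, a (i + j) - a i = b i := by
  classical
  let β : (Fin k → ℤ) → Fin D → ℝ := fun i => if h : i ∈ shiftBox k r j then b ⟨i, h⟩ else 0
  refine ⟨fun i => ∑ l ∈ Finset.range r, β (i - ((l : ℤ) + 1) • j), fun i => ?_⟩
  rw [← Finset.sum_sub_distrib]
  have h1 : ∀ l ∈ Finset.range r, β ((i : Fin k → ℤ) + j - ((l : ℤ) + 1) • j) -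
      β ((i : Fin k → ℤ) - ((l : ℤ) + 1) • j) =
      (fun l : ℕ => β (i - (l : ℤ) • j)) l - (fun l : ℕ => β (i - (l : ℤ) • j)) (l + 1) := by
    intro l _
    simp only
    congr 2
    · rw [add_smul, one_smul]; abel
  rw [Finset.sum_congr rfl h1, Finset.sum_range_sub']
  have h2 : (i : Fin k → ℤ) - ((r : ℕ) : ℤ) • j ∉ shiftBox k r j := by
    intro hmem
    obtain ⟨c, hc⟩ := Function.ne_iff.1 hj
    have h3 := (mem_box.1 (Finset.mem_filter.1 hmem).1) c
    have h4 := (mem_box.1 (Finset.mem_filter.1 i.2).1) c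
    simp only [Pi.sub_apply, Pi.smul_apply, smul_eq_mul] at h3
    simp only [Pi.zero_apply] at hc
    rcases lt_or_gt_of_ne hc with h | h <;> nlinarith
  have h5 : β ((i : Fin k → ℤ) - ((r : ℕ) : ℤ) • j) = 0 := dif_neg h2
  rw [h5]
  simp [β]

/-- A small constant perturbation `a` of a map `g` into patterns on the window `[2M]^k` for which no
pattern agrees with the shift by `j ≠ 0`, `|j| ≤ M`, of another pattern on the whole overlap. -/
theorem exists_vector_no_shift {k M D : ℕ} {E X I : Type*} [Finite I]
    [NormedAddCommGroup E] [NormedSpace ℝ E] [FiniteDimensional ℝ E]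
    (g : X → box k (2 * M) × Fin D → ℝ) (ψ : I → E → box k (2 * M) × Fin D → ℝ)
    (hψ : ∀ i, ContDiff ℝ 1 (ψ i)) (hg : ∀ x, ∃ i u, ψ i u = g x)
    (hdim : 2 * Module.finrank ℝ E < D * M ^ k) {η : ℝ} (hη : 0 < η) :
    ∃ a : box k (2 * M) × Fin D → ℝ, ‖a‖ < η ∧ ∀ j : Fin k → ℤ, j ≠ 0 → (∀ c, |j c| ≤ M) →
      ∀ x y, ∃ (i : Fin k → ℤ) (hi : i ∈ box k (2 * M)) (hij : i + j ∈ box k (2 * M)) (c : Fin D),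
        g x (⟨i + j, hij⟩, c) + a (⟨i + j, hij⟩, c) ≠ g y (⟨i, hi⟩, c) + a (⟨i, hi⟩, c) := by
  classical
  let J : Finset (Fin k → ℤ) :=
    (Fintype.piFinset fun _ => Finset.Icc (-M : ℤ) M).filter fun j => j ≠ 0
  have hJ : ∀ j, j ∈ J ↔ (∀ c, |j c| ≤ M) ∧ j ≠ 0 := by
    intro j; simp [J, abs_le]
  let fst : ∀ j, shiftBox k (2 * M) j → box k (2 * M) :=
    fun j i => ⟨i, (Finset.mem_filter.1 i.2).1⟩
  let snd : ∀ j, shiftBox k (2 * M) j → box k (2 * M) :=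
    fun j i => ⟨i + j, (Finset.mem_filter.1 i.2).2⟩
  let L : ∀ j : J × I × I, (box k (2 * M) × Fin D → ℝ) →ₗ[ℝ]
      (shiftBox k (2 * M) (j.1 : Fin k → ℤ) × Fin D → ℝ) := fun j =>
    LinearMap.funLeft ℝ ℝ (fun q => (snd j.1 q.1, q.2)) -
      LinearMap.funLeft ℝ ℝ (fun q => (fst j.1 q.1, q.2))
  let Q : ∀ j : J × I × I, E × E → shiftBox k (2 * M) (j.1 : Fin k → ℤ) × Fin D → ℝ :=
    fun j u q => ψ j.2.2 u.2 (fst j.1 q.1, q.2) - ψ j.2.1 u.1 (snd j.1 q.1, q.2)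
  have hL : ∀ j, Function.Surjective (L j) := by
    intro j b
    obtain ⟨a, ha⟩ := surjective_shift_sub (j := (j.1 : Fin k → ℤ)) ((hJ _).1 j.1.2).2
      (fun i c => b (i, c))
    refine ⟨fun q => a q.1 q.2, ?_⟩
    funext q
    exact congrFun (ha q.1) q.2
  have hQ : ∀ j, ContDiff ℝ 1 (Q j) := by
    intro j
    rw [contDiff_pi]
    intro q
    exact ((contDiff_pi.1 (hψ j.2.2) _).comp contDiff_snd).sub
      ((contDiff_pi.1 (hψ j.2.1) _).comp contDiff_fst)
  have hfin : ∀ j : J × I × I, Module.finrank ℝ (E × E) <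
      Fintype.card (shiftBox k (2 * M) (j.1 : Fin k → ℤ) × Fin D) := by
    intro j
    have := le_card_shiftBox ((hJ _).1 j.1.2).1
    rw [Module.finrank_prod, Fintype.card_prod, Fintype.card_coe, Fintype.card_fin]
    nlinarith
  obtain ⟨a, ha, hb⟩ := exists_small_linear_ne L hL Q hQ hfin hη
  refine ⟨a, ha, fun j hj hjM x y => ?_⟩
  by_contra! hcon
  obtain ⟨i, u, hu⟩ := hg x
  obtain ⟨i', u', hu'⟩ := hg y
  refine hb (⟨j, (hJ j).2 ⟨hjM, hj⟩⟩, i, i') (u, u') ?_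
  funext q
  have := hcon q.1 (Finset.mem_filter.1 q.1.2).1 (Finset.mem_filter.1 q.1.2).2 q.2
  simp only [L, Q, fst, snd, hu, hu', LinearMap.sub_apply, Pi.sub_apply, LinearMap.funLeft_apply]
  linarith

/-- A continuous `g` that is nearly constant on the fibers of `p` is approximated by `h ∘ p` with `h`
of class `C¹`, by a partition of unity. -/
theorem exists_smooth_approx {X V κ : Type*} [TopologicalSpace X] [CompactSpace X] [Fintype V]
    [Fintype κ] {p : X → κ → ℝ} (hp : Continuous p) {g : X → V → ℝ} (hg : Continuous g)
    {lo hi : ℝ} (hb : ∀ x v, g x v ∈ Icc lo hi) {δ : ℝ}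
    (hδ : ∀ x y, p x = p y → ∀ v, |g x v - g y v| < δ) :
    ∃ h : (κ → ℝ) → V → ℝ, ContDiff ℝ 1 h ∧
      ∀ x v, |h (p x) v - g x v| < δ ∧ h (p x) v ∈ Icc lo hi := by
  let t : (κ → ℝ) → Set (V → ℝ) := fun y =>
    {c | ∀ z, p z = y → ∀ v, |c v - g z v| < δ ∧ c v ∈ Icc lo hi}
  have ht : ∀ y, Convex ℝ (t y) := by
    intro y
    have : t y = ⋂ (z) (_ : p z = y) (v), (fun c : V → ℝ => c v) ⁻¹' (Metric.ball (g z v) δ ∩ Icc lo hi) := by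
      ext c; simp [t, Real.dist_eq]
    rw [this]
    refine convex_iInter fun z => convex_iInter fun _ => convex_iInter fun v => ?_
    exact ((convex_ball _ _).inter (convex_Icc _ _)).linear_preimage (LinearMap.proj (R := ℝ) (φ := fun _ : V => ℝ) v)
  have hloc : ∀ y : κ → ℝ, ∃ c : V → ℝ, ∀ᶠ y' in 𝓝 y, c ∈ t y' := by
    intro y
    have key : ∀ (K : Set X), IsClosed K → y ∉ p '' K → ∀ᶠ y' in 𝓝 y, y' ∉ p '' K := by
      intro K hK hy
      exact (hK.isCompact.image hp).isClosed.isOpen_compl.mem_nhds hy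
    by_cases hy : ∃ z, p z = y
    · obtain ⟨z, rfl⟩ := hy
      refine ⟨g z, ?_⟩
      have hK : IsClosed {z' | ∃ v, δ ≤ |g z v - g z' v|} := by
        simp only [ofPred_exists]
        refine isClosed_iUnion_of_finite fun v => isClosed_le continuous_const ?_
        fun_prop
      filter_upwards [key _ hK (by
        rintro ⟨z', ⟨v, hv⟩, h⟩
        exact absurd (hδ z z' h.symm v) (not_lt.2 hv))] with y' hy' z' hz' v
      refine ⟨not_le.1 fun h => hy' ⟨z', ⟨v, h⟩, hz'⟩, hb z v⟩
    · refine ⟨0, ?_⟩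
      filter_upwards [key univ isClosed_univ (by simpa using hy)] with y' hy' z' hz'
      exact absurd ⟨z', mem_univ _, hz'⟩ hy'
  obtain ⟨h, hh⟩ := exists_contMDiffMap_forall_mem_convex_of_local_const (n := 1)
    (modelWithCornersSelf ℝ (κ → ℝ)) ht hloc
  exact ⟨h, h.contMDiff.contDiff, fun x v => hh (p x) x rfl v⟩

theorem abs_shrink_sub_le {η g : ℝ} (hη : 0 ≤ η) (hg : g ∈ Icc (0 : ℝ) 1) :
    |((1 - 2 * η) * g + η) - g| ≤ η := by
  obtain ⟨h0, h1⟩ := hg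
  rw [abs_le]; constructor <;> nlinarith

/-- A continuous map into the cube factors approximately and smoothly through `p`, with room of
size `η` left for perturbations inside the cube. -/
theorem exists_smooth_factor {X V κ : Type*} [TopologicalSpace X] [CompactSpace X] [Fintype V]
    [Fintype κ] {p : X → κ → ℝ} (hp : Continuous p) {g : X → V → ℝ} (hg : Continuous g)
    (hb : ∀ x v, g x v ∈ Icc (0 : ℝ) 1) {δ : ℝ} (hδ0 : 0 < δ)
    (hδ : ∀ x y, p x = p y → ∀ v, |g x v - g y v| < δ) :
    ∃ η > 0, ∃ h : (κ → ℝ) → V → ℝ, ContDiff ℝ 1 h ∧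
      ∀ a : X → V → ℝ, (∀ x v, |a x v| ≤ η) → ∀ x v, |h (p x) v + a x v - g x v| < 2 * δ ∧
        h (p x) v + a x v ∈ Icc (0 : ℝ) 1 := by
  -- first shrink the cube towards its center, to `[η, 1 - η]`
  obtain ⟨η, hη0, hη1, hη2⟩ : ∃ η : ℝ, 0 < η ∧ η ≤ δ / 2 ∧ η ≤ 1 / 2 :=
    ⟨min (δ / 2) (1 / 2), by positivity, min_le_left _ _, min_le_right _ _⟩
  obtain ⟨h, hh, hh'⟩ := exists_smooth_approx (lo := η) (hi := 1 - η) hp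
    (g := fun x v => (1 - 2 * η) * g x v + η) (by fun_prop)
    (by
      intro x v
      obtain ⟨h0, h1⟩ := hb x v
      constructor <;> nlinarith) (δ := δ)
    (by
      intro x y hxy v
      have h1 := hδ x y hxy v
      have : (1 - 2 * η) * g x v + η - ((1 - 2 * η) * g y v + η) =
        (1 - 2 * η) * (g x v - g y v) := by ring
      rw [this, abs_mul, abs_of_nonneg (by linarith : 0 ≤ 1 - 2 * η)]
      nlinarith [abs_nonneg (g x v - g y v)])
  refine ⟨η, hη0, h, hh, fun a ha x v => ?_⟩
  obtain ⟨h1, h2, h3⟩ := hh' x v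
  have h4 := abs_shrink_sub_le hη0.le (hb x v)
  have h5 := ha x v
  rw [abs_le] at h4 h5
  rw [abs_lt] at h1
  refine ⟨abs_lt.2 ⟨?_, ?_⟩, ?_, ?_⟩ <;> linarith

/-- A map `g` nearly constant on the fibers of `p` has a perturbation inside the cube whose fibers lie
in the fibers of `p`. -/
theorem exists_injective_factor {X V κ I E : Type*} [TopologicalSpace X] [CompactSpace X]
    [Fintype V] [Fintype κ] [Finite I]
    [NormedAddCommGroup E] [NormedSpace ℝ E] [FiniteDimensional ℝ E]
    {p : X → κ → ℝ} (hp : Continuous p) (φ : I → E → κ → ℝ) (hφ : ∀ i, ContDiff ℝ 1 (φ i))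
    (hpφ : ∀ x, ∃ i u, φ i u = p x) {g : X → V → ℝ} (hg : Continuous g)
    (hb : ∀ x v, g x v ∈ Icc (0 : ℝ) 1) {δ : ℝ} (hδ0 : 0 < δ)
    (hδ : ∀ x y, p x = p y → ∀ v, |g x v - g y v| < δ)
    (hdim : 2 * Module.finrank ℝ E + 1 < Fintype.card V) :
    ∃ G : X → V → ℝ, Continuous G ∧ (∀ x v, G x v ∈ Icc (0 : ℝ) 1) ∧
      (∀ x v, |G x v - g x v| < 2 * δ) ∧ ∀ x y, G x = G y → p x = p y := by
  obtain ⟨η, hη, h, hh, hh'⟩ := exists_smooth_factor hp hg hb hδ0 hδ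
  obtain ⟨B, hB⟩ : ∃ B : ℝ, ∀ x, ‖p x‖ ≤ B := by
    obtain ⟨B, hB⟩ := (isCompact_range hp).isBounded.exists_norm_le
    exact ⟨B, fun x => hB _ (mem_range_self x)⟩
  set C : ℝ := Fintype.card κ * |B| + 1
  have hC : 0 < C := by positivity
  obtain ⟨a, ha, hinj⟩ := exists_matrix_injective p φ hφ hpφ h hh hdim (div_pos hη hC)
  have hsmall : ∀ x v, |(∑ c, p x c • a c) v| ≤ η := by
    intro x v
    rw [Finset.sum_apply]
    calc |∑ c, (p x c • a c) v| ≤ ∑ c : κ, |(p x c • a c) v| := Finset.abs_sum_le_sum_abs _ _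
      _ ≤ ∑ c : κ, |B| * (η / C) := by
        refine Finset.sum_le_sum fun c _ => ?_
        rw [Pi.smul_apply, smul_eq_mul, abs_mul]
        have h1 : |p x c| ≤ |B| := ((norm_le_pi_norm (p x) c).trans (hB x)).trans (le_abs_self _)
        have h2 : |a c v| ≤ η / C :=
          ((norm_le_pi_norm (a c) v).trans (norm_le_pi_norm a c)).trans ha.le
        gcongr
      _ = (Fintype.card κ * |B|) * (η / C) := by simp; ring
      _ ≤ C * (η / C) := by gcongr; simp [C]
      _ = η := by field_simp
  refine ⟨fun x => h (p x) + ∑ c, p x c • a c, ?_, ?_, ?_, hinj⟩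
  · have := hh.continuous
    fun_prop
  · exact fun x v => (hh' _ hsmall x v).2
  · exact fun x v => (hh' _ hsmall x v).1

/-- A map into patterns on `[2M]^k` nearly constant on the fibers of `p` has a perturbation inside the
cube for which no pattern agrees on the overlap with a shift of another pattern. -/
theorem exists_no_shift_factor {X κ I E : Type*} {k M D : ℕ} [TopologicalSpace X] [CompactSpace X]
    [Fintype κ] [Finite I] [NormedAddCommGroup E] [NormedSpace ℝ E] [FiniteDimensional ℝ E]
    {p : X → κ → ℝ} (hp : Continuous p) (φ : I → E → κ → ℝ) (hφ : ∀ i, ContDiff ℝ 1 (φ i))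
    (hpφ : ∀ x, ∃ i u, φ i u = p x) {g : X → box k (2 * M) × Fin D → ℝ} (hg : Continuous g)
    (hb : ∀ x v, g x v ∈ Icc (0 : ℝ) 1) {δ : ℝ} (hδ0 : 0 < δ)
    (hδ : ∀ x y, p x = p y → ∀ v, |g x v - g y v| < δ)
    (hdim : 2 * Module.finrank ℝ E < D * M ^ k) :
    ∃ G : X → box k (2 * M) × Fin D → ℝ, Continuous G ∧ (∀ x v, G x v ∈ Icc (0 : ℝ) 1) ∧
      (∀ x v, |G x v - g x v| < 2 * δ) ∧ ∀ j : Fin k → ℤ, j ≠ 0 → (∀ c, |j c| ≤ M) →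
      ∀ x y, ∃ (i : Fin k → ℤ) (hi : i ∈ box k (2 * M)) (hij : i + j ∈ box k (2 * M)) (c : Fin D),
        G x (⟨i + j, hij⟩, c) ≠ G y (⟨i, hi⟩, c) := by
  obtain ⟨η, hη, h, hh, hh'⟩ := exists_smooth_factor hp hg hb hδ0 hδ
  obtain ⟨a, ha, hsh⟩ := exists_vector_no_shift (fun x => h (p x)) (fun i u => h (φ i u))
    (fun i => hh.comp (hφ i)) (fun x => by
      obtain ⟨i, u, hu⟩ := hpφ x
      exact ⟨i, u, by rw [hu]⟩) hdim hη
  have hsmall : ∀ (_ : X) v, |a v| ≤ η := fun _ v => (norm_le_pi_norm a v).trans ha.le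
  refine ⟨fun x v => h (p x) v + a v, ?_, ?_, ?_, hsh⟩
  · have := hh.continuous
    fun_prop
  · exact fun x v => (hh' (fun _ => a) hsmall x v).2
  · exact fun x v => (hh' (fun _ => a) hsmall x v).1

/-! ### Block maps from the mean dimension bound -/

/-- The standard simplex as a finite simplicial complex. -/
theorem exists_finite_simplex (n : ℕ) :
    ∃ P : Geometry.SimplicialComplex ℝ (EuclideanSpace ℝ (Fin n)), P.faces.Finite ∧
      (∀ s ∈ P.faces, s.card ≤ n + 1) ∧
      ∀ w : Fin n → ℝ, (∀ i, 0 ≤ w i) → ∑ i, w i = 1 → WithLp.toLp 2 w ∈ P.space := by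
  classical
  let e : Fin n → EuclideanSpace ℝ (Fin n) := fun i => EuclideanSpace.basisFun (Fin n) ℝ i
  let S : Finset (EuclideanSpace ℝ (Fin n)) := Finset.univ.image e
  have hS : S.card ≤ n := Finset.card_image_le.trans (by simp)
  let A : PreAbstractSimplicialComplex (EuclideanSpace ℝ (Fin n)) :=
    { faces := {s | s.Nonempty ∧ s ⊆ S}
      isRelLowerSet_faces := fun s hs => ⟨hs.1, fun t ht htn => ⟨htn, Finset.Subset.trans ht hs.2⟩⟩ }
  have hind : AffineIndependent ℝ
      (Subtype.val : (⋃ s ∈ A.faces, (s : Set (EuclideanSpace ℝ (Fin n)))) → _) := by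
    have h1 : LinearIndependent ℝ e := by
      exact (EuclideanSpace.basisFun (Fin n) ℝ).orthonormal.linearIndependent
    refine h1.affineIndependent.range.mono ?_
    intro x hx
    simp only [mem_iUnion] at hx
    obtain ⟨s, hs, hx⟩ := hx
    have := hs.2 hx
    simpa [S] using this
  refine ⟨Geometry.SimplicialComplex.ofAffineIndependent A hind, ?_, ?_, ?_⟩
  · refine (S.powerset.finite_toSet).subset fun s hs => ?_
    simpa using hs.2
  · exact fun s hs => (Finset.card_le_card hs.2).trans (hS.trans (Nat.le_succ n))
  · intro w hw hw1
    have hne : S.Nonempty := by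
      rcases Nat.eq_zero_or_pos n with rfl | hn
      · simp at hw1
      · exact ⟨e ⟨0, hn⟩, by simp [S]⟩
    have hmem : S ∈ (Geometry.SimplicialComplex.ofAffineIndependent A hind).faces :=
      ⟨hne, Finset.Subset.refl _⟩
    refine Geometry.SimplicialComplex.convexHull_subset_space hmem ?_
    have h2 : WithLp.toLp 2 w = ∑ i, w i • e i := by
      ext j
      simp [e, Pi.single_apply]
    rw [h2]
    exact (convex_convexHull ℝ _).sum_mem (fun i _ => hw i) hw1
      (fun i _ => subset_convexHull ℝ _ (by simp [S]))

/-- The set of dimensions whose infimum defines `widim` is nonempty: use the nerve of a finite cover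
by small balls. -/
theorem widim_set_nonempty {k : ℕ} {X : Type*} [MetricSpace X] [CompactSpace X]
    {T : (Fin k → ℤ) → X → X} (hT : IsZkAction T) (N : ℕ) {ε : ℝ} (hε : 0 < ε) :
    {n : ℕ | ∃ (m : ℕ) (P : Geometry.SimplicialComplex ℝ (EuclideanSpace ℝ (Fin m))),
      P.faces.Finite ∧ (∀ s ∈ P.faces, s.card ≤ n + 1) ∧
      ∃ f : X → P.space, IsEpsEmbedding (blockRho T dist N) ε f}.Nonempty := by
  let Φ : X → (Fin k → Fin N) → X := fun x a => T (fun i => (a i : ℤ)) x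
  have hΦ : Continuous Φ := continuous_pi fun a => hT.cont _
  obtain ⟨t, ht⟩ := isCompact_univ.elim_finite_subcover
    (fun x : X => {y | dist (Φ y) (Φ x) < ε / 3})
    (fun x => isOpen_lt (by fun_prop) continuous_const)
    (fun x _ => mem_iUnion.2 ⟨x, by simp; positivity⟩)
  let c : Fin t.card → X := fun i => t.equivFin.symm i
  have hc : ∀ y, ∃ i, dist (Φ y) (Φ (c i)) < ε / 3 := by
    intro y
    have := ht (mem_univ y)
    simp only [mem_iUnion] at this
    obtain ⟨x, hx, hy⟩ := this
    refine ⟨t.equivFin ⟨x, hx⟩, ?_⟩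
    simpa [c] using hy
  let lam : Fin t.card → X → ℝ := fun i y => max 0 (ε / 3 - dist (Φ y) (Φ (c i)))
  have hlam0 : ∀ i y, 0 ≤ lam i y := fun i y => le_max_left _ _
  have hlam : ∀ i, Continuous (lam i) := fun i => by fun_prop
  have hlampos : ∀ i y, 0 < lam i y → dist (Φ y) (Φ (c i)) < ε / 3 := by
    intro i y h
    rcases lt_max_iff.1 h with h | h
    · exact absurd h (lt_irrefl _)
    · linarith
  let S : X → ℝ := fun y => ∑ i, lam i y
  have hS : Continuous S := by fun_prop
  have hex : ∀ y, ∃ i, 0 < lam i y := fun y => by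
    obtain ⟨i, hi⟩ := hc y
    exact ⟨i, lt_max_of_lt_right (by linarith)⟩
  have hSpos : ∀ y, 0 < S y := fun y => by
    obtain ⟨i, hi⟩ := hex y
    exact Finset.sum_pos' (fun i _ => hlam0 i y) ⟨i, Finset.mem_univ _, hi⟩
  obtain ⟨P, hP1, hP2, hP3⟩ := exists_finite_simplex t.card
  let w : X → Fin t.card → ℝ := fun y i => lam i y / S y
  have hw : Continuous w := continuous_pi fun i => (hlam i).div hS fun y => (hSpos y).ne'
  refine ⟨t.card, t.card, P, hP1, hP2, fun y => ⟨WithLp.toLp 2 (w y), hP3 _ ?_ ?_⟩, ?_, ?_⟩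
  · exact fun i => div_nonneg (hlam0 i y) (hSpos y).le
  · simp only [w]
    rw [← Finset.sum_div]
    exact div_self (hSpos y).ne'
  · exact ((PiLp.continuous_toLp 2 _).comp hw).subtype_mk _
  · intro x y hxy
    have h1 : w x = w y := by
      have := congrArg (fun z => WithLp.ofLp (Subtype.val z)) hxy
      simpa using this
    obtain ⟨i, hi⟩ := hex x
    have h2 : 0 < lam i y := by
      have h3 : 0 < w y i := by rw [← h1]; exact div_pos hi (hSpos x)
      have h4 : lam i y = w y i * S y := by
        simp only [w]; field_simp [(hSpos y).ne']
      rw [h4]; exact mul_pos h3 (hSpos y)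
    have h5 : dist (Φ x) (Φ y) ≤ 2 * ε / 3 := by
      have := dist_triangle_right (Φ x) (Φ y) (Φ (c i))
      linarith [hlampos i x hi, hlampos i y h2]
    have h6 : blockRho T dist N x y ≤ 2 * ε / 3 :=
      Real.iSup_le (fun a => (dist_le_pi_dist (Φ x) (Φ y) a).trans h5) (by positivity)
    linarith

/-- A simplex with at most `d + 1` vertices lies in an affine image of `ℝ^d`. -/
theorem exists_param_convexHull {F : Type*} [NormedAddCommGroup F] [NormedSpace ℝ F] {d : ℕ}
    (s : Finset F) (hs : s.card ≤ d + 1) :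
    ∃ φ : (Fin d → ℝ) → F, ContDiff ℝ 1 φ ∧ convexHull ℝ (s : Set F) ⊆ range φ := by
  classical
  rcases s.eq_empty_or_nonempty with rfl | ⟨v₀, hv₀⟩
  · exact ⟨fun _ => 0, contDiff_const, by simp⟩
  · have hcard : Fintype.card (s.erase v₀) ≤ Fintype.card (Fin d) := by
      rw [Fintype.card_coe, Finset.card_erase_of_mem hv₀, Fintype.card_fin]; omega
    obtain ⟨e⟩ := Function.Embedding.nonempty_of_card_le hcard
    refine ⟨fun u => v₀ + ∑ v : s.erase v₀, u (e v) • ((v : F) - v₀), by fun_prop, ?_⟩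
    intro x hx
    rw [Finset.mem_convexHull'] at hx
    obtain ⟨w, -, hw1, hwx⟩ := hx
    refine ⟨Function.extend e (fun v => w v) 0, ?_⟩
    simp only [e.injective.extend_apply]
    rw [Finset.sum_coe_sort (s.erase v₀) (fun v => w v • (v - v₀))]
    have h1 : ∑ v ∈ s.erase v₀, w v • (v - v₀) = ∑ v ∈ s, w v • (v - v₀) := by
      rw [← Finset.add_sum_erase s _ hv₀]; simp
    rw [h1]
    simp only [smul_sub, Finset.sum_sub_distrib, ← Finset.sum_smul, hw1, hwx, one_smul]
    abel

/-- There is a continuous map `p` to some `ℝ^m` whose fibres have diameter less than `ε` along the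
whole cube `[N]`, and whose range is covered by finitely many `C¹` images of `ℝ^d`. -/
def HasBlockMap {k : ℕ} {X : Type*} [MetricSpace X] (T : (Fin k → ℤ) → X → X) (ε : ℝ)
    (N d : ℕ) : Prop :=
  ∃ (m : ℕ) (p : X → Fin m → ℝ) (I : Type) (φ : I → (Fin d → ℝ) → Fin m → ℝ),
    Continuous p ∧ (∀ x y, p x = p y → ∀ i ∈ box k N, dist (T i x) (T i y) < ε) ∧
    Finite I ∧ (∀ i, ContDiff ℝ 1 (φ i)) ∧ ∀ x, ∃ i u, φ i u = p x

theorem exists_hasBlockMap {k D : ℕ} {X : Type*} [MetricSpace X] [CompactSpace X]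
    {T : (Fin k → ℤ) → X → X} (hT : IsZkAction T)
    (hmdim : mdim X T < (D : ℝ≥0∞) / 2 ^ (k + 1)) {ε : ℝ} (hε : 0 < ε) :
    ∃ N d : ℕ, 1 ≤ N ∧ 2 ^ (k + 1) * d < D * N ^ k ∧ HasBlockMap T ε N d := by
  have h1 : (⨅ (N : ℕ) (_ : 1 ≤ N), (widim X (blockRho T dist N) ε : ℝ≥0∞) / (N : ℝ≥0∞) ^ k) <
      (D : ℝ≥0∞) / 2 ^ (k + 1) :=
    lt_of_le_of_lt (le_iSup₂ (f := fun (ε : ℝ) (_ : 0 < ε) => ⨅ (N : ℕ) (_ : 1 ≤ N),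
      (widim X (blockRho T dist N) ε : ℝ≥0∞) / (N : ℝ≥0∞) ^ k) ε hε) hmdim
  simp only [iInf_lt_iff] at h1
  obtain ⟨N, hN, h2⟩ := h1
  obtain ⟨m, P, hfin, hcard, f, hf, hfε⟩ := Nat.sInf_mem (widim_set_nonempty hT N hε)
  have hd : sInf {n : ℕ | ∃ (m : ℕ) (P : Geometry.SimplicialComplex ℝ (EuclideanSpace ℝ (Fin m))),
      P.faces.Finite ∧ (∀ s ∈ P.faces, s.card ≤ n + 1) ∧
      ∃ f : X → P.space, IsEpsEmbedding (blockRho T dist N) ε f} =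
      widim X (blockRho T dist N) ε := rfl
  rw [hd] at hcard
  set d := widim X (blockRho T dist N) ε with hdd
  refine ⟨N, d, hN, ?_, m, fun x => WithLp.ofLp (f x : EuclideanSpace ℝ (Fin m)), ?_⟩
  · have hN0 : (N : ℝ≥0∞) ^ k ≠ 0 := by positivity
    have hN1 : (N : ℝ≥0∞) ^ k ≠ ⊤ := by finiteness
    by_contra hcon
    push Not at hcon
    refine absurd h2 (not_lt.2 (ENNReal.div_le_of_le_mul ?_))
    have h5 : (d : ℝ≥0∞) / (N : ℝ≥0∞) ^ k * 2 ^ (k + 1) = (2 ^ (k + 1) * d) / (N : ℝ≥0∞) ^ k := by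
      rw [mul_comm, mul_div_assoc]
    rw [h5, ENNReal.le_div_iff_mul_le (Or.inl hN0) (Or.inl hN1)]
    exact_mod_cast hcon
  · choose φ hφ hφr using fun s : P.faces => exists_param_convexHull (d := d) (s : Finset (EuclideanSpace ℝ (Fin m))) (hcard s s.2)
    refine ⟨P.faces, fun s u => WithLp.ofLp (φ s u), ?_, ?_, hfin, ?_, ?_⟩
    · exact (PiLp.continuous_ofLp 2 _).comp (continuous_subtype_val.comp hf)
    · intro x y hxy i hi
      have h5 : f x = f y := by
        apply Subtype.ext
        exact WithLp.ofLp_injective 2 hxy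
      have h6 := hfε x y h5
      have h7 := mem_box.1 hi
      let a : Fin k → Fin N := fun c => ⟨(i c).toNat, by have := h7 c; omega⟩
      have h8 : (fun c => ((a c : ℕ) : ℤ)) = i := by
        funext c
        have := h7 c
        simp [a]; omega
      refine lt_of_le_of_lt ?_ h6
      have := le_ciSup (f := fun a : Fin k → Fin N =>
        dist (T (fun i => (a i : ℤ)) x) (T (fun i => (a i : ℤ)) y)) (finite_range _).bddAbove a
      simp only [h8] at this
      exact this
    · intro s
      exact (EuclideanSpace.equiv (Fin m) ℝ).contDiff.comp (hφ s)
    · intro x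
      obtain ⟨s, hs, hx⟩ := Geometry.SimplicialComplex.mem_space_iff.1 (f x).2
      obtain ⟨u, hu⟩ := hφr ⟨s, hs⟩ hx
      exact ⟨⟨s, hs⟩, u, congrArg WithLp.ofLp hu⟩

/-- Joining the block maps along the translates `c j` gives a map with small fibers along the union of
the translated cubes, whose range is covered by `C¹` images of a space of dimension `d * |J|`. -/
theorem HasBlockMap.corners {k N d : ℕ} {X : Type*} [MetricSpace X]
    {T : (Fin k → ℤ) → X → X} (hT : IsZkAction T) {ε : ℝ} (h : HasBlockMap T ε N d)
    {J : Type} [Fintype J] (c : J → Fin k → ℤ) :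
    ∃ (κ : Type) (_ : Fintype κ) (p : X → κ → ℝ) (I : Type) (φ : I → (J → Fin d → ℝ) → κ → ℝ),
    Continuous p ∧
    (∀ x y, p x = p y → ∀ j, ∀ i ∈ box k N, dist (T (i + c j) x) (T (i + c j) y) < ε) ∧
    Finite I ∧ (∀ i, ContDiff ℝ 1 (φ i)) ∧ ∀ x, ∃ i u, φ i u = p x := by
  obtain ⟨m, p, I, φ, hp, hpε, hI, hφ, hpφ⟩ := h
  refine ⟨J × Fin m, inferInstance, fun x q => p (T (c q.1) x) q.2, J → I,
    fun ι u q => φ (ι q.1) (u q.1) q.2, ?_, ?_, inferInstance, ?_, ?_⟩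
  · exact continuous_pi fun q => (continuous_apply q.2).comp (hp.comp (hT.cont _))
  · intro x y hxy j i hi
    rw [hT.map_add, hT.map_add]
    exact hpε _ _ (funext fun l => congrFun hxy (j, l)) i hi
  · intro ι
    rw [contDiff_pi]
    intro q
    exact (contDiff_pi.1 (hφ (ι q.1)) q.2).comp (contDiff_apply _ _ _)
  · intro x
    choose i u hu using fun j => hpφ (T (c j) x)
    exact ⟨i, u, funext fun q => congrFun (hu q.1) q.2⟩

/-! ### Bump functions and markers -/

section Bump

variable {ι : Type*} {Λ : Finset ι} {α g : ι → ℝ} {f : ℝ}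

theorem bump_eq_of_pos (h0 : ∀ n ∈ Λ, 0 ≤ α n)
    (huniq : ∀ n ∈ Λ, ∀ m ∈ Λ, 0 < α n → 0 < α m → n = m) {n : ι} (hn : n ∈ Λ) (hpos : 0 < α n) :
    ∑ m ∈ Λ, α m * (g m - f) = α n * (g n - f) := by
  refine Finset.sum_eq_single_of_mem n hn fun m hm hne => ?_
  have : α m = 0 := by
    by_contra h
    exact hne (huniq m hm n hn (lt_of_le_of_ne (h0 m hm) (Ne.symm h)) hpos)
  simp [this]

/-- Interpolating from `f` towards `g m` with weights `α m`, at most one of which is positive, stays in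
`[0, 1]` and within `δ` of `f`. -/
theorem bump_bounds (h0 : ∀ n ∈ Λ, 0 ≤ α n) (h1 : ∀ n ∈ Λ, α n ≤ 1)
    (huniq : ∀ n ∈ Λ, ∀ m ∈ Λ, 0 < α n → 0 < α m → n = m) (hf : f ∈ Icc (0 : ℝ) 1)
    (hg : ∀ n ∈ Λ, g n ∈ Icc (0 : ℝ) 1) {δ : ℝ} (hδ : 0 < δ) (hgf : ∀ n ∈ Λ, |g n - f| < δ) :
    f + ∑ m ∈ Λ, α m * (g m - f) ∈ Icc (0 : ℝ) 1 ∧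
      |f + ∑ m ∈ Λ, α m * (g m - f) - f| < δ := by
  by_cases h : ∃ n ∈ Λ, 0 < α n
  · obtain ⟨n, hn, hpos⟩ := h
    rw [bump_eq_of_pos h0 huniq hn hpos]
    obtain ⟨hf0, hf1⟩ := hf
    obtain ⟨hg0, hg1⟩ := hg n hn
    have h1n := h1 n hn
    refine ⟨⟨by nlinarith, by nlinarith⟩, ?_⟩
    rw [add_sub_cancel_left, abs_mul, abs_of_pos hpos]
    have := hgf n hn
    nlinarith [abs_nonneg (g n - f)]
  · push Not at h
    have : ∑ m ∈ Λ, α m * (g m - f) = 0 :=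
      Finset.sum_eq_zero fun m hm => by rw [le_antisymm (h m hm) (h0 m hm), zero_mul]
    rw [this]
    simpa using ⟨hf, hδ⟩

theorem bump_eq (h0 : ∀ n ∈ Λ, 0 ≤ α n)
    (huniq : ∀ n ∈ Λ, ∀ m ∈ Λ, 0 < α n → 0 < α m → n = m) {n : ι} (hn : n ∈ Λ) (h1 : α n = 1) :
    f + ∑ m ∈ Λ, α m * (g m - f) = g n := by
  rw [bump_eq_of_pos h0 huniq hn (by rw [h1]; exact one_pos), h1]
  ring

end Bump

theorem IsZkAction.neg_apply {k : ℕ} {X : Type*} [TopologicalSpace X] {T : (Fin k → ℤ) → X → X}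
    (hT : IsZkAction T) (n : Fin k → ℤ) (x : X) : T (-n) (T n x) = x := by
  rw [← hT.map_add, neg_add_cancel, hT.map_zero]

theorem IsZkAction.apply_neg {k : ℕ} {X : Type*} [TopologicalSpace X] {T : (Fin k → ℤ) → X → X}
    (hT : IsZkAction T) (n : Fin k → ℤ) (x : X) : T n (T (-n) x) = x := by
  rw [← hT.map_add, add_neg_cancel, hT.map_zero]

/-- A continuous version of the marker property: a function with values in `[0, 1]` that equals `1` at
relatively dense times of each orbit, and is positive at times that do not differ by an element of
`F` other than `0`. -/
theorem exists_marker_function {k : ℕ} {X : Type*} [MetricSpace X] [CompactSpace X]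
    {T : (Fin k → ℤ) → X → X} (hT : IsZkAction T) (hmarker : MarkerProperty T)
    (F : Finset (Fin k → ℤ)) :
    ∃ φ : X → ℝ, Continuous φ ∧ (∀ x, 0 ≤ φ x) ∧ (∀ x, φ x ≤ 1) ∧
      (∃ R : ℕ, ∀ x, ∃ n : Fin k → ℤ, (∀ c, |n c| ≤ R) ∧ φ (T n x) = 1) ∧
      ∀ x, ∀ j ∈ F, 0 < φ x → 0 < φ (T j x) → j = 0 := by
  obtain ⟨U, hU, hcov, hdis⟩ := hmarker F
  obtain ⟨g, hg, hg0, hgU⟩ : ∃ g : X → ℝ, Continuous g ∧ (∀ x, 0 ≤ g x) ∧ ∀ x, 0 < g x ↔ x ∈ U := by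
    rcases (Uᶜ).eq_empty_or_nonempty with h | h
    · refine ⟨fun _ => 1, continuous_const, fun _ => zero_le_one, fun x => ?_⟩
      rw [compl_empty_iff.1 h]; simp
    · refine ⟨fun x => Metric.infDist x Uᶜ, Metric.continuous_infDist_pt _,
        fun x => Metric.infDist_nonneg, fun x => ?_⟩
      rw [← hU.isClosed_compl.notMem_iff_infDist_pos h]; simp
  let V : ℕ → Set X := fun R => {x | ∃ n : Fin k → ℤ, (∀ c, |n c| ≤ R) ∧ 1 < (R + 1) * g (T n x)}
  have hVo : ∀ R, IsOpen (V R) := by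
    intro R
    have : V R = ⋃ (n : Fin k → ℤ) (_ : ∀ c, |n c| ≤ R), {x | 1 < (R + 1) * g (T n x)} := by
      ext x; simp [V]
    rw [this]
    refine isOpen_iUnion fun n => isOpen_iUnion fun _ => isOpen_lt continuous_const ?_
    have := hT.cont n
    fun_prop
  have hVc : univ ⊆ ⋃ R, V R := by
    intro x _
    have : x ∈ ⋃ n : Fin k → ℤ, T n '' U := by rw [hcov]; trivial
    obtain ⟨n, y, hy, rfl⟩ := mem_iUnion.1 this
    have hgy := (hgU y).2 hy
    obtain ⟨R₁, hR₁⟩ := exists_nat_gt (1 / g y)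
    obtain ⟨R₂, hR₂⟩ : ∃ R₂ : ℕ, ∀ c, |n c| ≤ R₂ :=
      ⟨∑ c, (n c).natAbs, fun c => by
        rw [Int.abs_eq_natAbs]
        exact_mod_cast Finset.single_le_sum (f := fun c => (n c).natAbs) (fun _ _ => Nat.zero_le _)
          (Finset.mem_univ c)⟩
    refine mem_iUnion.2 ⟨R₁ + R₂, -n, fun c => ?_, ?_⟩
    · have := hR₂ c
      rw [Pi.neg_apply, abs_neg]; push_cast; linarith
    · rw [hT.neg_apply]
      rw [div_lt_iff₀ hgy] at hR₁
      push_cast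
      have : (0 : ℝ) ≤ R₂ := by positivity
      nlinarith
  have hVd : Directed (· ⊆ ·) V := by
    refine (monotone_nat_of_le_succ fun R x => ?_).directed_le
    rintro ⟨n, hn, h⟩
    refine ⟨n, fun c => (hn c).trans (by push_cast; linarith), h.trans_le ?_⟩
    push_cast
    nlinarith [hg0 (T n x)]
  obtain ⟨R, hR⟩ := isCompact_univ.elim_directed_cover V hVo hVc hVd
  refine ⟨fun x => min 1 ((R + 1) * g x), by fun_prop, fun x => ?_, fun x => min_le_left _ _,
    ⟨R, fun x => ?_⟩, ?_⟩
  · have := hg0 x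
    positivity
  · obtain ⟨n, hn, h1⟩ := hR (mem_univ x)
    exact ⟨n, hn, min_eq_left h1.le⟩
  · intro x j hj h1 h2
    have hmem : ∀ y, 0 < min 1 ((R + 1) * g y) → y ∈ U := fun y hy => by
      rw [← hgU]
      have := (lt_min_iff.1 hy).2
      by_contra hcon
      have h3 : g y = 0 := le_antisymm (not_lt.1 hcon) (hg0 y)
      simp [h3] at this
    by_contra hne
    have : T j x ∈ U ∩ T j '' U := ⟨hmem _ h2, x, hmem _ h1, rfl⟩
    rw [hdis j hj hne] at this
    exact this

theorem box_decomp {k t N : ℕ} {i : Fin k → ℤ} (hi : i ∈ box k (t * N)) :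
    ∃ j ∈ box k t, ∃ i' ∈ box k N, i = i' + (N : ℤ) • j := by
  rw [mem_box] at hi
  refine ⟨fun c => i c / N, mem_box.2 fun c => ?_, fun c => i c % N, mem_box.2 fun c => ?_,
    funext fun c => ?_⟩
  · obtain ⟨h0, h1⟩ := hi c
    refine ⟨Int.ediv_nonneg h0 (by positivity), Int.ediv_lt_of_lt_mul ?_ (by exact_mod_cast h1)⟩
    rcases Nat.eq_zero_or_pos N with rfl | h
    · simp at h1; omega
    · exact_mod_cast h
  · obtain ⟨h0, h1⟩ := hi c
    have hN : (0 : ℤ) < N := by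
      rcases Nat.eq_zero_or_pos N with rfl | h
      · simp at h1; omega
      · exact_mod_cast h
    exact ⟨Int.emod_nonneg _ hN.ne', Int.emod_lt_of_pos _ hN⟩
  · simp [Int.emod_add_mul_ediv]

/-! ### First block of coordinates: encoding markers -/

theorem exists_uniform_dist {X : Type*} [MetricSpace X] [CompactSpace X] {D : ℕ}
    {f : X → Fin D → ℝ} (hf : Continuous f) {δ : ℝ} (hδ : 0 < δ) :
    ∃ ε > 0, ∀ x y, dist x y < ε → ∀ c, |f x c - f y c| < δ := by
  obtain ⟨ε, hε, h⟩ := Metric.uniformContinuous_iff.1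
    (CompactSpace.uniformContinuous_of_continuous hf) δ hδ
  refine ⟨ε, hε, fun x y hxy c => ?_⟩
  have := (dist_le_pi_dist (f x) (f y) c).trans_lt (h hxy)
  rwa [Real.dist_eq] at this

/-- A continuous family of patterns on a large window `[2M]^k`, close to the patterns of `f₀`, in which
no pattern agrees on the overlap with a shift by `j ≠ 0`, `|j| ≤ M`, of another pattern. -/
theorem exists_window_map {k D M₀ : ℕ} {X : Type*} [MetricSpace X] [CompactSpace X]
    {T : (Fin k → ℤ) → X → X} (hT : IsZkAction T)
    (hmdim : mdim X T < (D : ℝ≥0∞) / 2 ^ (k + 1))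
    {f₀ : X → Fin D → ℝ} (hf₀ : Continuous f₀) (hf₀b : ∀ x c, f₀ x c ∈ Icc (0 : ℝ) 1)
    {δ : ℝ} (hδ : 0 < δ) :
    ∃ M ≥ M₀, ∃ G : X → box k (2 * M) × Fin D → ℝ, Continuous G ∧
      (∀ x v, G x v ∈ Icc (0 : ℝ) 1) ∧ (∀ x v, |G x v - f₀ (T v.1 x) v.2| < δ) ∧
      ∀ j : Fin k → ℤ, j ≠ 0 → (∀ c, |j c| ≤ M) →
      ∀ x y, ∃ (i : Fin k → ℤ) (hi : i ∈ box k (2 * M)) (hij : i + j ∈ box k (2 * M)) (c : Fin D),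
        G x (⟨i + j, hij⟩, c) ≠ G y (⟨i, hi⟩, c) := by
  obtain ⟨ε, hε, hε'⟩ := exists_uniform_dist hf₀ (half_pos hδ)
  obtain ⟨N, d, hN, hNd, hB⟩ := exists_hasBlockMap hT hmdim hε
  let τ := M₀ + 1
  obtain ⟨κ, _, p, I, φ, hp, hpε, hI, hφ, hpφ⟩ :=
    hB.corners hT (J := box k (2 * τ)) (fun j => (N : ℤ) • (j : Fin k → ℤ))
  have hfin : 2 * Module.finrank ℝ (box k (2 * τ) → Fin d → ℝ) < D * (τ * N) ^ k := by
    simp only [Module.finrank_pi_fintype, Module.finrank_self, Finset.sum_const, Finset.card_univ,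
      Fintype.card_coe, card_box, Fintype.card_fin, smul_eq_mul, mul_one]
    have h1 : 0 < τ ^ k := by positivity
    calc 2 * ((2 * τ) ^ k * d) = (2 ^ (k + 1) * d) * τ ^ k := by rw [mul_pow, pow_succ]; ring
      _ < (D * N ^ k) * τ ^ k := Nat.mul_lt_mul_of_pos_right hNd h1
      _ = D * (τ * N) ^ k := by rw [mul_pow]; ring
  obtain ⟨G, hG, hGb, hGδ, hGs⟩ := exists_no_shift_factor (M := τ * N) (k := k) hp φ hφ hpφ
    (g := fun x v => f₀ (T v.1 x) v.2)
    (continuous_pi fun v => (continuous_apply v.2).comp (hf₀.comp (hT.cont _)))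
    (fun x v => hf₀b _ _) (half_pos hδ)
    (by
      intro x y hxy v
      have hv : (v.1 : Fin k → ℤ) ∈ box k ((2 * τ) * N) := by rw [mul_assoc]; exact v.1.2
      obtain ⟨j, hj, i', hi', h⟩ := box_decomp hv
      refine hε' _ _ ?_ _
      have := hpε x y hxy ⟨j, hj⟩ i' hi'
      rwa [← h] at this) hfin
  refine ⟨τ * N, ?_, G, hG, hGb, fun x v => ?_, hGs⟩
  · calc M₀ ≤ τ * 1 := by simp [τ]
      _ ≤ τ * N := by gcongr
  · have := hGδ x v
    rwa [mul_div_cancel₀ _ (two_ne_zero)] at this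

/-- By compactness, the disagreement on overlaps is bounded below by a uniform constant. -/
theorem exists_separation {k D M : ℕ} {X : Type*} [TopologicalSpace X] [CompactSpace X]
    {G : X → box k (2 * M) × Fin D → ℝ} (hG : Continuous G)
    (hGs : ∀ j : Fin k → ℤ, j ≠ 0 → (∀ c, |j c| ≤ M) →
      ∀ x y, ∃ (i : Fin k → ℤ) (hi : i ∈ box k (2 * M)) (hij : i + j ∈ box k (2 * M)) (c : Fin D),
        G x (⟨i + j, hij⟩, c) ≠ G y (⟨i, hi⟩, c)) :
    ∃ γ > 0, ∀ j : Fin k → ℤ, j ≠ 0 → (∀ c, |j c| ≤ M) →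
      ∀ x y, ∃ (i : Fin k → ℤ) (hi : i ∈ box k (2 * M)) (hij : i + j ∈ box k (2 * M)) (c : Fin D),
        2 * γ ≤ |G x (⟨i + j, hij⟩, c) - G y (⟨i, hi⟩, c)| := by
  classical
  have key : ∀ j : Fin k → ℤ, j ≠ 0 → (∀ c, |j c| ≤ M) → ∃ γ > 0, ∀ x y,
      2 * γ ≤ dist (fun v : shiftBox k (2 * M) j × Fin D =>
          G x (⟨v.1 + j, (Finset.mem_filter.1 v.1.2).2⟩, v.2))
        (fun v => G y (⟨v.1, (Finset.mem_filter.1 v.1.2).1⟩, v.2)) := by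
    intro j hj hjM
    rcases isEmpty_or_nonempty X with h | h
    · exact ⟨1, one_pos, fun x => h.elim x⟩
    have hcont : Continuous fun q : X × X => dist (fun v : shiftBox k (2 * M) j × Fin D =>
          G q.1 (⟨v.1 + j, (Finset.mem_filter.1 v.1.2).2⟩, v.2))
        (fun v => G q.2 (⟨v.1, (Finset.mem_filter.1 v.1.2).1⟩, v.2)) := by
      fun_prop
    obtain ⟨q, -, hq⟩ := isCompact_univ.exists_isMinOn univ_nonempty hcont.continuousOn
    have hpos : 0 < dist (fun v : shiftBox k (2 * M) j × Fin D =>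
          G q.1 (⟨v.1 + j, (Finset.mem_filter.1 v.1.2).2⟩, v.2))
        (fun v => G q.2 (⟨v.1, (Finset.mem_filter.1 v.1.2).1⟩, v.2)) := by
      refine dist_pos.2 fun heq => ?_
      obtain ⟨i, hi, hij, c, hne⟩ := hGs j hj hjM q.1 q.2
      exact hne (congrFun heq (⟨i, Finset.mem_filter.2 ⟨hi, hij⟩⟩, c))
    refine ⟨_, half_pos hpos, fun x y => ?_⟩
    rw [mul_div_cancel₀ _ two_ne_zero]
    exact hq (mem_univ (x, y))
  let J : Finset (Fin k → ℤ) :=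
    (Fintype.piFinset fun _ => Finset.Icc (-M : ℤ) M).filter fun j => j ≠ 0
  have hJ : ∀ j, j ∈ J ↔ (∀ c, |j c| ≤ M) ∧ j ≠ 0 := by
    intro j; simp [J, abs_le]
  have hev : ∀ᶠ γ : ℝ in 𝓝[>] 0, ∀ j ∈ J, ∀ x y,
      2 * γ ≤ dist (fun v : shiftBox k (2 * M) j × Fin D =>
          G x (⟨v.1 + j, (Finset.mem_filter.1 v.1.2).2⟩, v.2))
        (fun v => G y (⟨v.1, (Finset.mem_filter.1 v.1.2).1⟩, v.2)) := by
    rw [eventually_all_finset]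
    intro j hj
    obtain ⟨γ, hγ, h⟩ := key j ((hJ j).1 hj).2 ((hJ j).1 hj).1
    filter_upwards [Ioo_mem_nhdsGT hγ] with γ' hγ' x y
    exact le_trans (by linarith [hγ'.2]) (h x y)
  obtain ⟨γ, hγ, hγ0⟩ := (hev.and self_mem_nhdsWithin).exists
  have hγ0 : 0 < γ := hγ0
  refine ⟨γ, hγ0, fun j hj hjM x y => ?_⟩
  by_contra! hcon
  refine absurd (hγ j ((hJ j).2 ⟨hjM, hj⟩) x y) (not_le.2 ?_)
  rw [dist_pi_lt_iff (by linarith)]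
  intro v
  rw [Real.dist_eq]
  exact hcon _ _ _ _

/-- First perturbation: `f₁` is close to `f₀`, and its itineraries determine a function `Ψ` whose
positivity times along each orbit are sparse, while the times with `Ψ = 1` are relatively dense. -/
theorem exists_marker_perturbation {k D : ℕ} (M₀ : ℕ) {X : Type*} [MetricSpace X] [CompactSpace X]
    {T : (Fin k → ℤ) → X → X} (hT : IsZkAction T) (hmarker : MarkerProperty T)
    (hmdim : mdim X T < (D : ℝ≥0∞) / 2 ^ (k + 1))
    {f₀ : X → Fin D → ℝ} (hf₀ : Continuous f₀) (hf₀b : ∀ x c, f₀ x c ∈ Icc (0 : ℝ) 1)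
    {δ : ℝ} (hδ : 0 < δ) :
    ∃ f₁ : X → Fin D → ℝ, Continuous f₁ ∧ (∀ x c, f₁ x c ∈ Icc (0 : ℝ) 1) ∧
      (∀ x c, |f₁ x c - f₀ x c| < δ) ∧ ∃ Ψ : X → ℝ, Continuous Ψ ∧ (∀ x, Ψ x ∈ Icc (0 : ℝ) 1) ∧
      (∀ x, ∀ j : Fin k → ℤ, (∀ c, |j c| ≤ M₀) → 0 < Ψ x → 0 < Ψ (T j x) → j = 0) ∧
      (∃ R : ℕ, ∀ x, ∃ n : Fin k → ℤ, (∀ c, |n c| ≤ R) ∧ Ψ (T n x) = 1) ∧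
      ∀ x y, (∀ n, f₁ (T n x) = f₁ (T n y)) → Ψ x = Ψ y := by
  classical
  obtain ⟨M, hM, G, hG, hGb, hGδ, hGs⟩ :=
    exists_window_map (M₀ := M₀) hT hmdim hf₀ hf₀b hδ
  obtain ⟨γ, hγ, hsep⟩ := exists_separation hG hGs
  obtain ⟨φ, hφ, hφ0, hφ1, ⟨R, hR⟩, hφF⟩ := exists_marker_function hT hmarker
    (Fintype.piFinset fun _ => Finset.Ioo (-(2 * M : ℕ) : ℤ) (2 * M : ℕ))
  have huniq : ∀ x, ∀ i ∈ (Finset.univ : Finset (box k (2 * M))),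
      ∀ i' ∈ (Finset.univ : Finset (box k (2 * M))),
      0 < φ (T (-(i : Fin k → ℤ)) x) → 0 < φ (T (-(i' : Fin k → ℤ)) x) → i = i' := by
    intro x i _ i' _ h h'
    have h1 : T (-(i' : Fin k → ℤ)) x = T ((i : Fin k → ℤ) - i') (T (-(i : Fin k → ℤ)) x) := by
      rw [← hT.map_add]; congr 1; abel
    rw [h1] at h'
    have := hφF _ ((i : Fin k → ℤ) - i') (by
      simp only [Fintype.mem_piFinset, Finset.mem_Ioo, Pi.sub_apply]
      intro c
      have h2 := mem_box.1 i.2 c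
      have h3 := mem_box.1 i'.2 c
      constructor <;> linarith) h h'
    exact Subtype.ext (sub_eq_zero.1 this)
  -- write the pattern `G z` on the window based at `z`, for each `z` on the orbit with `φ z = 1`
  let f₁ : X → Fin D → ℝ := fun x c => f₀ x c + ∑ i : box k (2 * M),
    φ (T (-(i : Fin k → ℤ)) x) * (G (T (-(i : Fin k → ℤ)) x) (i, c) - f₀ x c)
  have hf₁ : Continuous f₁ := by
    refine continuous_pi fun c => ?_
    have h1 : Continuous fun x => f₀ x c := (continuous_apply c).comp hf₀
    refine h1.add (continuous_finsetSum _ fun i _ => ?_)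
    have h2 : Continuous fun x => G (T (-(i : Fin k → ℤ)) x) (i, c) :=
      (continuous_apply _).comp (hG.comp (hT.cont _))
    exact (hφ.comp (hT.cont _)).mul (h2.sub h1)
  have hbd : ∀ x c, f₁ x c ∈ Icc (0 : ℝ) 1 ∧ |f₁ x c - f₀ x c| < δ := by
    intro x c
    refine bump_bounds (fun i _ => hφ0 _) (fun i _ => hφ1 _) (huniq x) (hf₀b x c)
      (fun i _ => hGb _ _) hδ fun i _ => ?_
    have := hGδ (T (-(i : Fin k → ℤ)) x) (i, c)
    simpa only [hT.apply_neg] using this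
  have hwin : ∀ z, φ z = 1 → ∀ v : box k (2 * M) × Fin D, f₁ (T v.1 z) v.2 = G z v := by
    intro z hz v
    have := bump_eq (g := fun i : box k (2 * M) =>
      G (T (-(i : Fin k → ℤ)) (T v.1 z)) (i, v.2)) (f := f₀ (T v.1 z) v.2)
      (α := fun i : box k (2 * M) => φ (T (-(i : Fin k → ℤ)) (T v.1 z)))
      (fun i _ => hφ0 _) (huniq (T v.1 z)) (Finset.mem_univ v.1) (by rw [hT.neg_apply, hz])
    simp only [hT.neg_apply] at this
    exact this
  -- `Ψ` detects that the pattern of `f₁` on the window is within `γ` of some pattern of `G`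
  let w : X → box k (2 * M) × Fin D → ℝ := fun x v => f₁ (T v.1 x) v.2
  have hw : Continuous w :=
    continuous_pi fun v => (continuous_apply v.2).comp (hf₁.comp (hT.cont _))
  let Ψ : X → ℝ := fun x => max 0 (1 - Metric.infDist (w x) (range G) / γ)
  have hΨpos : ∀ x, 0 < Ψ x → ∃ z, ∀ v, |w x v - G z v| < γ := by
    intro x hx
    have h1 : Metric.infDist (w x) (range G) < γ := by
      rcases lt_max_iff.1 hx with h | h
      · exact absurd h (lt_irrefl _)
      · rw [sub_pos, div_lt_one hγ] at h
        exact h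
    rw [Metric.infDist_lt_iff ⟨G x, mem_range_self x⟩] at h1
    obtain ⟨_, ⟨z, rfl⟩, hz⟩ := h1
    refine ⟨z, fun v => ?_⟩
    rw [← Real.dist_eq]
    exact (dist_le_pi_dist _ _ v).trans_lt hz
  refine ⟨f₁, hf₁, fun x c => (hbd x c).1, fun x c => (hbd x c).2, Ψ, ?_, ?_, ?_, ⟨R, ?_⟩, ?_⟩
  · exact continuous_const.max (continuous_const.sub
      (((Metric.continuous_infDist_pt _).comp hw).div_const _))
  · intro x
    refine ⟨le_max_left _ _, max_le zero_le_one ?_⟩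
    have : 0 ≤ Metric.infDist (w x) (range G) / γ := div_nonneg Metric.infDist_nonneg hγ.le
    linarith
  · intro x j hj h h'
    by_contra hne
    obtain ⟨z, hz⟩ := hΨpos x h
    obtain ⟨z', hz'⟩ := hΨpos _ h'
    obtain ⟨i, hi, hij, c, hge⟩ := hsep j hne (fun c => (hj c).trans (by exact_mod_cast hM)) z z'
    have h1 := hz (⟨i + j, hij⟩, c)
    have h2 := hz' (⟨i, hi⟩, c)
    simp only [w] at h1 h2
    rw [← hT.map_add] at h2
    rw [abs_lt] at h1 h2
    refine absurd hge (not_le.2 (abs_lt.2 ⟨?_, ?_⟩)) <;> linarith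
  · intro x
    obtain ⟨n, hn, h1⟩ := hR x
    refine ⟨n, hn, ?_⟩
    have h2 : w (T n x) = G (T n x) := funext fun v => hwin _ h1 v
    simp only [Ψ, h2, Metric.infDist_zero_of_mem (mem_range_self (f := G) (T n x)), zero_div,
      sub_zero]
    exact max_eq_right zero_le_one
  · intro x y hxy
    have : w x = w y := funext fun v => congrFun (hxy v.1) v.2
    simp only [Ψ, this]

/-! ### Second block of coordinates: encoding orbits -/

/-- There is room for a code from cubes of side `q N` to cubes of side `(q + 1) N` once `q` is large,
since `2 (1 + (1 + 1 / q) ^ k)` tends to `4 ≤ 2 ^ (k + 1)`. -/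
theorem exists_block_ratio {k D N d : ℕ} (hk : 1 ≤ k) (hNd : 2 ^ (k + 1) * d < D * N ^ k) :
    ∃ q : ℕ, 1 ≤ q ∧ 2 * ((q ^ k + (q + 1) ^ k) * d) + 1 < D * (q * N) ^ k := by
  have h4 : 4 * d + 1 ≤ D * N ^ k := by
    have : 2 ^ 2 ≤ 2 ^ (k + 1) := Nat.pow_le_pow_right (by norm_num) (by omega)
    nlinarith
  have hlim : Tendsto (fun q : ℕ => 2 * (d : ℝ) * (1 + (1 + 1 / (q : ℝ)) ^ k) + (1 / (q : ℝ)) ^ k)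
      atTop (𝓝 (2 * (d : ℝ) * (1 + (1 + 0) ^ k) + 0 ^ k)) := by
    have h1 := tendsto_one_div_atTop_nhds_zero_nat (𝕜 := ℝ)
    exact (tendsto_const_nhds.mul (tendsto_const_nhds.add ((tendsto_const_nhds.add h1).pow k))).add
      (h1.pow k)
  have hlt : 2 * (d : ℝ) * (1 + (1 + 0) ^ k) + 0 ^ k < 4 * d + 1 := by
    rw [add_zero, one_pow, zero_pow (by omega)]; linarith
  obtain ⟨q, hq, hq1⟩ := ((hlim.eventually_lt_const hlt).and (eventually_ge_atTop 1)).exists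
  refine ⟨q, hq1, ?_⟩
  have hq0 : (0 : ℝ) < q := by exact_mod_cast hq1
  have hqk : (0 : ℝ) < (q : ℝ) ^ k := by positivity
  have h5 := mul_lt_mul_of_pos_right hq hqk
  have h6 : (2 * (d : ℝ) * (1 + (1 + 1 / (q : ℝ)) ^ k) + (1 / (q : ℝ)) ^ k) * (q : ℝ) ^ k =
      2 * (((q : ℝ) ^ k + (q + 1) ^ k) * d) + 1 := by
    have h7 : (1 + 1 / (q : ℝ)) ^ k * (q : ℝ) ^ k = (q + 1) ^ k := by
      rw [← mul_pow]; congr 1; field_simp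
    have h8 : (1 / (q : ℝ)) ^ k * (q : ℝ) ^ k = 1 := by
      rw [← mul_pow, one_div, inv_mul_cancel₀ hq0.ne', one_pow]
    linear_combination (2 * (d : ℝ)) * h7 + h8
  rw [h6] at h5
  have h9 : (2 * ((q ^ k + (q + 1) ^ k) * d) + 1 : ℕ) < (4 * d + 1) * q ^ k := by
    exact_mod_cast h5
  calc _ < (4 * d + 1) * q ^ k := h9
    _ ≤ (D * N ^ k) * q ^ k := by gcongr
    _ = D * (q * N) ^ k := by rw [mul_pow]; ring

/-- A perturbation of the pattern of `f₀` on the cube of side `q N` at grid position `b` that determines,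
up to `ε`, the orbit on the cube of side `(q + 1) N` at grid position `b`. -/
theorem exists_code_block {k D N d q : ℕ} {X : Type*} [MetricSpace X] [CompactSpace X]
    {T : (Fin k → ℤ) → X → X} (hT : IsZkAction T) {ε : ℝ} (hB : HasBlockMap T ε N d)
    (hq : 2 * ((q ^ k + (q + 1) ^ k) * d) + 1 < D * (q * N) ^ k)
    {f₀ : X → Fin D → ℝ} (hf₀ : Continuous f₀) (hf₀b : ∀ x c, f₀ x c ∈ Icc (0 : ℝ) 1)
    {δ : ℝ} (hδ : 0 < δ) (hε : ∀ x y, dist x y < ε → ∀ c, |f₀ x c - f₀ y c| < δ / 2)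
    (b : Fin k → ℤ) :
    ∃ G : X → box k (q * N) × Fin D → ℝ, Continuous G ∧ (∀ x v, G x v ∈ Icc (0 : ℝ) 1) ∧
      (∀ x v, |G x v - f₀ (T (v.1 + ((q * N : ℕ) : ℤ) • b) x) v.2| < δ) ∧
      ∀ x y, G x = G y → ∀ i ∈ box k ((q + 1) * N),
        dist (T (i + (((q + 1) * N : ℕ) : ℤ) • b) x) (T (i + (((q + 1) * N : ℕ) : ℤ) • b) y) < ε := by
  obtain ⟨κ, _, p, I, φ, hp, hpε, hI, hφ, hpφ⟩ :=
    hB.corners hT (J := box k q ⊕ box k (q + 1)) (Sum.elim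
      (fun j => (N : ℤ) • (j : Fin k → ℤ) + ((q * N : ℕ) : ℤ) • b)
      (fun j => (N : ℤ) • (j : Fin k → ℤ) + (((q + 1) * N : ℕ) : ℤ) • b))
  have hfin : 2 * Module.finrank ℝ (box k q ⊕ box k (q + 1) → Fin d → ℝ) + 1 <
      Fintype.card (box k (q * N) × Fin D) := by
    simp only [Module.finrank_pi_fintype, Module.finrank_self, Finset.sum_const, Finset.card_univ,
      Fintype.card_coe, card_box, Fintype.card_fin, smul_eq_mul, mul_one, Fintype.card_sum,
      Fintype.card_prod]
    rw [mul_comm _ D]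
    exact hq
  obtain ⟨G, hG, hGb, hGδ, hGi⟩ := exists_injective_factor (V := box k (q * N) × Fin D) hp φ hφ hpφ
    (g := fun x v => f₀ (T (v.1 + ((q * N : ℕ) : ℤ) • b) x) v.2)
    (continuous_pi fun v => (continuous_apply v.2).comp (hf₀.comp (hT.cont _)))
    (fun x v => hf₀b _ _) (half_pos hδ)
    (by
      intro x y hxy v
      obtain ⟨j, hj, i', hi', h⟩ := box_decomp v.1.2
      refine hε _ _ ?_ _
      have := hpε x y hxy (Sum.inl ⟨j, hj⟩) i' hi'
      rwa [Sum.elim_inl, ← add_assoc, ← h] at this) hfin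
  refine ⟨G, hG, hGb, fun x v => ?_, fun x y hxy i hi => ?_⟩
  · have := hGδ x v
    rwa [mul_div_cancel₀ _ (two_ne_zero)] at this
  · obtain ⟨j, hj, i', hi', h⟩ := box_decomp hi
    have := hpε x y (hGi x y hxy) (Sum.inr ⟨j, hj⟩) i' hi'
    rwa [Sum.elim_inr, ← add_assoc, ← h] at this

theorem emod_mem_box {k L : ℕ} (hL : 1 ≤ L) (i : Fin k → ℤ) : (fun c => i c % (L : ℤ)) ∈ box k L :=
  mem_box.2 fun c => ⟨Int.emod_nonneg _ (by positivity), Int.emod_lt_of_pos _ (by positivity)⟩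

theorem emod_add_ediv_vec {k L : ℕ} (i : Fin k → ℤ) :
    (fun c => i c % (L : ℤ)) + (L : ℤ) • (fun c => i c / (L : ℤ)) = i := by
  funext c
  simp [Int.emod_add_mul_ediv]

/-- A perturbation `G` of the patterns of `f₀` such that the values of `G` within `ρ` of `s v` determine
the orbit at time `v` up to `ε`. The essential point is that `s < 1`. -/
theorem exists_code {k D : ℕ} (hk : 1 ≤ k) {X : Type*} [MetricSpace X] [CompactSpace X]
    {T : (Fin k → ℤ) → X → X} (hT : IsZkAction T)
    (hmdim : mdim X T < (D : ℝ≥0∞) / 2 ^ (k + 1))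
    {f₀ : X → Fin D → ℝ} (hf₀ : Continuous f₀) (hf₀b : ∀ x c, f₀ x c ∈ Icc (0 : ℝ) 1)
    {δ : ℝ} (hδ : 0 < δ) {ε : ℝ} (hε : 0 < ε) :
    ∃ s ρ : ℝ, 0 < s ∧ s < 1 ∧ 0 ≤ ρ ∧ ∃ G : (Fin k → ℤ) → X → Fin D → ℝ,
      (∀ i, Continuous (G i)) ∧ (∀ i x c, G i x c ∈ Icc (0 : ℝ) 1) ∧
      (∀ i x c, |G i x c - f₀ (T i x) c| < δ) ∧
      ∀ (v : Fin k → ℤ) (x y : X),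
        (∀ i : Fin k → ℤ, (∀ c, |(i c : ℝ) - s * v c| ≤ ρ) → G i x = G i y) →
        dist (T v x) (T v y) < ε := by
  obtain ⟨ε', hε', hε''⟩ := exists_uniform_dist hf₀ (half_pos hδ)
  obtain ⟨N, d, hN, hNd, hB⟩ := exists_hasBlockMap hT hmdim (lt_min hε hε')
  obtain ⟨q, hq1, hq⟩ := exists_block_ratio hk hNd
  choose G hG hGb hGδ hGi using exists_code_block hT hB hq hf₀ hf₀b hδ
    (fun x y hxy => hε'' x y (hxy.trans_le (min_le_right _ _)))
  have hqN : 1 ≤ q * N := Nat.mul_pos hq1 hN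
  have hqN' : 1 ≤ (q + 1) * N := Nat.mul_pos (Nat.succ_pos q) hN
  have hq0 : (0 : ℝ) < q := by exact_mod_cast hq1
  have hN0 : (0 : ℝ) < N := by exact_mod_cast hN
  refine ⟨q / (q + 1), q * N, by positivity, ?_, by positivity,
    fun i x c => G (fun c => i c / ((q * N : ℕ) : ℤ)) x (⟨_, emod_mem_box hqN i⟩, c),
    ?_, ?_, ?_, ?_⟩
  · rw [div_lt_one (by positivity)]; linarith
  · exact fun i => continuous_pi fun c => (continuous_apply _).comp (hG _)
  · exact fun i x c => hGb _ _ _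
  · intro i x c
    have := hGδ (fun c => i c / ((q * N : ℕ) : ℤ)) x (⟨_, emod_mem_box hqN i⟩, c)
    simp only [emod_add_ediv_vec] at this
    exact this
  · intro v x y hxy
    set b : Fin k → ℤ := fun c => v c / (((q + 1) * N : ℕ) : ℤ) with hb
    have h1 := hGi b x y (funext fun w => ?_) _ (emod_mem_box hqN' v)
    · rw [hb, emod_add_ediv_vec] at h1
      exact h1.trans_le (min_le_left _ _)
    · obtain ⟨⟨w, hw⟩, c₀⟩ := w
      have hw' := mem_box.1 hw
      have h2 := hxy (w + ((q * N : ℕ) : ℤ) • b) (fun c => ?_)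
      · have h3 := congrFun h2 c₀
        have h4 : (fun c => (w + ((q * N : ℕ) : ℤ) • b) c / ((q * N : ℕ) : ℤ)) = b := by
          funext c
          have := hw' c
          simp only [Pi.add_apply, Pi.smul_apply, smul_eq_mul]
          rw [Int.add_mul_ediv_left _ _ (by positivity), Int.ediv_eq_zero_of_lt this.1 this.2,
            zero_add]
        have h5 : (fun c => (w + ((q * N : ℕ) : ℤ) • b) c % ((q * N : ℕ) : ℤ)) = w := by
          funext c
          have := hw' c
          simp only [Pi.add_apply, Pi.smul_apply, smul_eq_mul]
          rw [Int.add_mul_emod_self_left, Int.emod_eq_of_lt this.1 this.2]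
        simp only [h4, h5] at h3
        exact h3
      · -- both `i c` and `s * v c` lie in `[ρ * b c, ρ * (b c + 1))`
        have hw1 : (0 : ℝ) ≤ w c := by exact_mod_cast (hw' c).1
        have hw2 : (w c : ℝ) < q * N := by exact_mod_cast (hw' c).2
        have hL : (0 : ℤ) < (((q + 1) * N : ℕ) : ℤ) := by positivity
        have e1 : ((((q + 1) * N : ℕ) : ℤ) : ℝ) * b c ≤ v c := by
          exact_mod_cast Int.mul_ediv_self_le hL.ne'
        have e2 : (v c : ℝ) < ((((q + 1) * N : ℕ) : ℤ) : ℝ) * b c + (((q + 1) * N : ℕ) : ℤ) := by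
          exact_mod_cast Int.lt_mul_ediv_self_add hL
        push_cast at e1 e2
        have hs : (0 : ℝ) < q / (q + 1) := by positivity
        have e4 := mul_le_mul_of_nonneg_left e1 hs.le
        have e5 := mul_lt_mul_of_pos_left e2 hs
        have e6 : (q : ℝ) / (q + 1) * ((q + 1) * N * b c) = q * N * b c := by field_simp
        have e7 : (q : ℝ) / (q + 1) * ((q + 1) * N * b c + (q + 1) * N) = q * N * b c + q * N := by
          field_simp
        rw [e6] at e4
        rw [e7] at e5
        simp only [Pi.add_apply, Pi.smul_apply, smul_eq_mul]
        push_cast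
        rw [abs_le]
        constructor <;> linarith

/-! ### Weighted Voronoi cells -/

theorem exists_quadratic_threshold {s ρ : ℝ} (hs : s < 1) (B : ℝ) :
    ∃ M : ℕ, ∀ t : ℝ, (M : ℝ) ≤ t → B ≤ (1 - s) * t ^ 2 - 2 * ρ * t := by
  obtain ⟨M, hM⟩ := exists_nat_ge (max (max B 0) ((2 * ρ + 1) / (1 - s)))
  refine ⟨M, fun t ht => ?_⟩
  have h1 : B ≤ t := ((le_max_left _ _).trans (le_max_left _ _)).trans (hM.trans ht)
  have h0 : 0 ≤ t := ((le_max_right _ _).trans (le_max_left _ _)).trans (hM.trans ht)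
  have h2 : (2 * ρ + 1) / (1 - s) ≤ t := (le_max_right _ _).trans (hM.trans ht)
  rw [div_le_iff₀ (by linarith)] at h2
  nlinarith

/-- A point `n` minimizing the weighted squared distance `|n|² + C₁ (1 - ψ n)` to the origin exists, and
its cost is at most `k R²` if a point with `ψ = 1` lies within `R`. -/
theorem exists_weighted_nearest {k : ℕ} {R : ℕ} {C₁ : ℝ} (hC₁ : ((k * R ^ 2 : ℕ) : ℝ) ≤ C₁)
    {ψ : (Fin k → ℤ) → ℝ} (hψ : ∀ n, ψ n ∈ Icc (0 : ℝ) 1)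
    (hdense : ∃ n : Fin k → ℤ, (∀ c, |n c| ≤ R) ∧ ψ n = 1) :
    ∃ n : Fin k → ℤ, ∑ c, (n c : ℝ) ^ 2 + C₁ * (1 - ψ n) ≤ (k * R ^ 2 : ℕ) ∧
      ∀ m : Fin k → ℤ, ∑ c, (n c : ℝ) ^ 2 + C₁ * (1 - ψ n) ≤ ∑ c, (m c : ℝ) ^ 2 + C₁ * (1 - ψ m) := by
  classical
  have hC₁0 : 0 ≤ C₁ := le_trans (by positivity) hC₁
  set C₀ : ℕ := k * R ^ 2 with hC₀
  let cost : (Fin k → ℤ) → ℝ := fun n => ∑ c, (n c : ℝ) ^ 2 + C₁ * (1 - ψ n)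
  obtain ⟨n₀, hn₀, hψ₀⟩ := hdense
  have hcost₀ : cost n₀ ≤ C₀ := by
    simp only [cost, hψ₀, sub_self, mul_zero, add_zero]
    calc ∑ c, (n₀ c : ℝ) ^ 2 ≤ ∑ _c : Fin k, (R : ℝ) ^ 2 := by
          refine Finset.sum_le_sum fun c _ => ?_
          have : |(n₀ c : ℝ)| ≤ R := by exact_mod_cast hn₀ c
          exact sq_le_sq' (by linarith [(abs_le.1 this).1]) (abs_le.1 this).2
      _ = C₀ := by simp [hC₀]
  have hin : ∀ n, cost n ≤ C₀ → n ∈ Fintype.piFinset fun _ : Fin k => Finset.Icc (-C₀ : ℤ) C₀ := by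
    intro n hn
    rw [Fintype.mem_piFinset]
    intro c
    have h1 : (n c : ℝ) ^ 2 ≤ C₀ := by
      have h2 : (n c : ℝ) ^ 2 ≤ ∑ c, (n c : ℝ) ^ 2 :=
        Finset.single_le_sum (f := fun c => (n c : ℝ) ^ 2) (fun _ _ => sq_nonneg _)
          (Finset.mem_univ c)
      have h3 : 0 ≤ C₁ * (1 - ψ n) := mul_nonneg hC₁0 (by linarith [(hψ n).2])
      simp only [cost] at hn
      linarith
    have h2 : n c ^ 2 ≤ (C₀ : ℤ) := by exact_mod_cast h1
    rw [Finset.mem_Icc]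
    constructor <;> nlinarith
  obtain ⟨n, -, hmin⟩ := Finset.exists_min_image _ cost ⟨n₀, hin n₀ hcost₀⟩
  have hn : cost n ≤ C₀ := (hmin n₀ (hin n₀ hcost₀)).trans hcost₀
  refine ⟨n, hn, fun m => ?_⟩
  by_cases hm : cost m ≤ C₀
  · exact hmin m (hin m hm)
  · exact hn.trans (not_le.1 hm).le

/-- Let `n` be the point nearest to the origin in the weighted Voronoi sense with weights
`C₁ * (1 - ψ)`. Then, for the weights scaled by `s`, the point `n` is nearest with a margin of `1`
as seen from every point `n + i` within `ρ` of `(1 - s) n`. -/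
theorem gap_of_nearest {k M C₀ : ℕ} {s ρ C₁ : ℝ} (hs0 : 0 < s) (hs1 : s < 1) (hρ : 0 ≤ ρ)
    (hM : ∀ t : ℝ, (M : ℝ) ≤ t → 1 + k * (ρ ^ 2 / (1 - s)) ≤ (1 - s) * t ^ 2 - 2 * ρ * t)
    (hC₁ : 1 + k * (2 * M * (ρ + C₀)) ≤ s * (C₁ - C₀))
    {ψ : (Fin k → ℤ) → ℝ} (hψ : ∀ n, ψ n ∈ Icc (0 : ℝ) 1)
    (hsparse : ∀ n m, (∀ c, |m c - n c| ≤ (M : ℤ)) → 0 < ψ n → 0 < ψ m → m = n)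
    {n : Fin k → ℤ} (hn : ∑ c, (n c : ℝ) ^ 2 + C₁ * (1 - ψ n) ≤ C₀)
    (hmin : ∀ m : Fin k → ℤ,
      ∑ c, (n c : ℝ) ^ 2 + C₁ * (1 - ψ n) ≤ ∑ c, (m c : ℝ) ^ 2 + C₁ * (1 - ψ m))
    (hnb : ∀ c, |(n c : ℝ)| ≤ C₀) {i : Fin k → ℤ} (hi : ∀ c, |(i c : ℝ) + s * n c| ≤ ρ)
    {m : Fin k → ℤ} (hm : m ≠ n) :
    1 ≤ (∑ c, ((m c : ℝ) - (n c + i c)) ^ 2 + s * C₁ * (1 - ψ m)) -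
      (∑ c, (i c : ℝ) ^ 2 + s * C₁ * (1 - ψ n)) := by
  have hs1' : 0 < 1 - s := by linarith
  -- `gap = (1 - s) |p|² - 2 p·e + s (cost m - cost n)` with `p = m - n` and `e = i + s n`
  have hid : (∑ c, ((m c : ℝ) - (n c + i c)) ^ 2 + s * C₁ * (1 - ψ m)) -
      (∑ c, (i c : ℝ) ^ 2 + s * C₁ * (1 - ψ n)) =
      ∑ c, ((1 - s) * ((m c : ℝ) - n c) ^ 2 - 2 * (i c + s * n c) * (m c - n c)) +
      s * ((∑ c, (m c : ℝ) ^ 2 + C₁ * (1 - ψ m)) - (∑ c, (n c : ℝ) ^ 2 + C₁ * (1 - ψ n))) := by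
    have : ∑ c, ((m c : ℝ) - (n c + i c)) ^ 2 - ∑ c, (i c : ℝ) ^ 2 =
        ∑ c, ((1 - s) * ((m c : ℝ) - n c) ^ 2 - 2 * (i c + s * n c) * (m c - n c)) +
        s * (∑ c, (m c : ℝ) ^ 2 - ∑ c, (n c : ℝ) ^ 2) := by
      rw [← Finset.sum_sub_distrib, ← Finset.sum_sub_distrib, Finset.mul_sum,
        ← Finset.sum_add_distrib]
      refine Finset.sum_congr rfl fun c _ => ?_
      ring
    linear_combination this
  by_cases hfar : ∃ c, (M : ℤ) < |m c - n c|
  · obtain ⟨c₀, hc₀⟩ := hfar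
    set B := ρ ^ 2 / (1 - s) with hB
    have hB0 : 0 ≤ B := by positivity
    have hBe : (1 - s) * B = ρ ^ 2 := by rw [hB]; field_simp
    have hterm : ∀ c, (1 - s) * |(m c : ℝ) - n c| ^ 2 - 2 * ρ * |(m c : ℝ) - n c| ≤
        (1 - s) * ((m c : ℝ) - n c) ^ 2 - 2 * (i c + s * n c) * (m c - n c) := by
      intro c
      have h1 : (i c + s * n c) * ((m c : ℝ) - n c) ≤ ρ * |(m c : ℝ) - n c| :=
        (le_abs_self _).trans (by rw [abs_mul]; exact mul_le_mul_of_nonneg_right (hi c) (abs_nonneg _))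
      rw [sq_abs]
      linarith
    have hlow : ∀ c, -B ≤ (1 - s) * |(m c : ℝ) - n c| ^ 2 - 2 * ρ * |(m c : ℝ) - n c| := by
      intro c
      have : 0 ≤ ((1 - s) * |(m c : ℝ) - n c| - ρ) ^ 2 := sq_nonneg _
      have h2 : 0 ≤ (1 - s) * ((1 - s) * |(m c : ℝ) - n c| ^ 2 - 2 * ρ * |(m c : ℝ) - n c| + B) := by
        nlinarith
      have := nonneg_of_mul_nonneg_right h2 hs1'
      linarith
    have hbig := hM |(m c₀ : ℝ) - n c₀| (by exact_mod_cast hc₀.le)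
    have hsum : 1 + k * B + B ≤ ∑ c, (((1 - s) * |(m c : ℝ) - n c| ^ 2 -
        2 * ρ * |(m c : ℝ) - n c|) + B) :=
      le_trans (by linarith) (Finset.single_le_sum (f := fun c =>
        ((1 - s) * |(m c : ℝ) - n c| ^ 2 - 2 * ρ * |(m c : ℝ) - n c|) + B)
        (fun c _ => by linarith [hlow c]) (Finset.mem_univ c₀))
    rw [Finset.sum_add_distrib, Finset.sum_const, Finset.card_univ, Fintype.card_fin,
      nsmul_eq_mul] at hsum
    have hle := Finset.sum_le_sum fun c (_ : c ∈ Finset.univ) => hterm c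
    have := mul_nonneg hs0.le (sub_nonneg.2 (hmin m))
    rw [hid]
    linarith
  · push Not at hfar
    have hC : (0 : ℝ) < C₁ - C₀ := by
      have : (0 : ℝ) ≤ k * (2 * M * (ρ + C₀)) := by positivity
      exact pos_of_mul_pos_right (by linarith : 0 < s * (C₁ - C₀)) hs0.le
    have hnsq : (0 : ℝ) ≤ ∑ c, (n c : ℝ) ^ 2 := Finset.sum_nonneg fun _ _ => sq_nonneg _
    have hC₁pos : (0 : ℝ) < C₁ := by
      have : (0 : ℝ) ≤ C₀ := by positivity
      linarith
    have hψn : C₁ - C₀ ≤ C₁ * ψ n := by nlinarith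
    have hψn0 : 0 < ψ n := pos_of_mul_pos_right (by linarith : 0 < C₁ * ψ n) hC₁pos.le
    have hψm : ψ m = 0 := by
      by_contra h
      exact hm (hsparse n m hfar hψn0 (lt_of_le_of_ne (hψ m).1 (Ne.symm h)))
    have hterm : ∀ c, (i c : ℝ) ^ 2 - 2 * M * (ρ + C₀) ≤ ((m c : ℝ) - (n c + i c)) ^ 2 := by
      intro c
      have h1 : |(m c : ℝ) - n c| ≤ M := by exact_mod_cast hfar c
      have h2 : |(i c : ℝ)| ≤ ρ + C₀ := by
        have h3 : |s * (n c : ℝ)| ≤ C₀ := by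
          rw [abs_mul, abs_of_pos hs0]
          have := hnb c
          nlinarith [abs_nonneg (n c : ℝ)]
        have h4 := hi c
        rw [abs_le] at h3 h4 ⊢
        constructor <;> linarith
      have h5 : (i c : ℝ) * (m c - n c) ≤ (ρ + C₀) * M :=
        (le_abs_self _).trans (by
          rw [abs_mul]; exact mul_le_mul h2 h1 (abs_nonneg _) (by positivity))
      nlinarith [sq_nonneg ((m c : ℝ) - n c)]
    have hle := Finset.sum_le_sum fun c (_ : c ∈ Finset.univ) => hterm c
    rw [Finset.sum_sub_distrib, Finset.sum_const, Finset.card_univ, Fintype.card_fin,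
      nsmul_eq_mul] at hle
    rw [hψm]
    have := mul_le_mul_of_nonneg_left hψn hs0.le
    linarith

/-! ### Assembling the two blocks -/

/-- A number in `[0, 1]` attached to the index `n`: it is positive only if `K` has a strict minimum
on `Λ` at `n`, and it is `1` if every other value of `K` on `Λ` exceeds `K n` by at least `1`. -/
noncomputable def gapWeight {ι : Type*} [DecidableEq ι] (Λ : Finset ι) (K : ι → ℝ) (n : ι) : ℝ :=
  max 0 (1 - ∑ m ∈ Λ.erase n, max 0 (1 - (K m - K n)))

section GapWeight

variable {ι : Type*} [DecidableEq ι] {Λ : Finset ι} {K : ι → ℝ}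

theorem gapWeight_nonneg (n : ι) : 0 ≤ gapWeight Λ K n := le_max_left _ _

theorem gapWeight_le_one (n : ι) : gapWeight Λ K n ≤ 1 :=
  max_le zero_le_one (by
    have : 0 ≤ ∑ m ∈ Λ.erase n, max 0 (1 - (K m - K n)) :=
      Finset.sum_nonneg fun _ _ => le_max_left _ _
    linarith)

theorem lt_of_gapWeight_pos {n m : ι} (hm : m ∈ Λ) (hmn : m ≠ n) (h : 0 < gapWeight Λ K n) :
    K n < K m := by
  by_contra hle
  have h1 : max 0 (1 - (K m - K n)) ≤ ∑ m ∈ Λ.erase n, max 0 (1 - (K m - K n)) :=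
    Finset.single_le_sum (f := fun m => max 0 (1 - (K m - K n))) (fun _ _ => le_max_left _ _)
      (Finset.mem_erase.2 ⟨hmn, hm⟩)
  have h2 := (le_max_right 0 (1 - (K m - K n))).trans h1
  have h3 : gapWeight Λ K n = 0 := max_eq_left (by linarith)
  linarith

theorem gapWeight_unique : ∀ n ∈ Λ, ∀ m ∈ Λ, 0 < gapWeight Λ K n → 0 < gapWeight Λ K m → n = m := by
  intro n hn m hm h h'
  by_contra hne
  exact lt_asymm (lt_of_gapWeight_pos hm (Ne.symm hne) h) (lt_of_gapWeight_pos hn hne h')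

theorem gapWeight_eq_one {n : ι} (h : ∀ m, m ≠ n → 1 ≤ K m - K n) : gapWeight Λ K n = 1 := by
  have : ∑ m ∈ Λ.erase n, max 0 (1 - (K m - K n)) = 0 :=
    Finset.sum_eq_zero fun m hm => max_eq_left (by linarith [h m (Finset.ne_of_mem_erase hm)])
  rw [gapWeight, this]
  norm_num

end GapWeight

/-- Two maps into `[0,1]^D` have arbitrarily small perturbations whose itineraries together determine
points up to `ε`. -/
theorem exists_pair_perturbation {k D : ℕ} (hk : 1 ≤ k) {X : Type*} [MetricSpace X]
    [CompactSpace X] {T : (Fin k → ℤ) → X → X} (hT : IsZkAction T) (hmarker : MarkerProperty T)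
    (hmdim : mdim X T < (D : ℝ≥0∞) / 2 ^ (k + 1))
    {f₀ g₀ : X → Fin D → ℝ} (hf₀ : Continuous f₀) (hf₀b : ∀ x c, f₀ x c ∈ Icc (0 : ℝ) 1)
    (hg₀ : Continuous g₀) (hg₀b : ∀ x c, g₀ x c ∈ Icc (0 : ℝ) 1)
    {δ : ℝ} (hδ : 0 < δ) {ε : ℝ} (hε : 0 < ε) :
    ∃ f g : X → Fin D → ℝ, Continuous f ∧ (∀ x c, f x c ∈ Icc (0 : ℝ) 1) ∧
      (∀ x c, |f x c - f₀ x c| < δ) ∧ Continuous g ∧ (∀ x c, g x c ∈ Icc (0 : ℝ) 1) ∧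
      (∀ x c, |g x c - g₀ x c| < δ) ∧
      ∀ x y, (∀ n, f (T n x) = f (T n y)) → (∀ n, g (T n x) = g (T n y)) → dist x y < ε := by
  classical
  obtain ⟨s, ρ, hs0, hs1, hρ, G, hG, hGb, hGδ, hGi⟩ := exists_code hk hT hmdim hg₀ hg₀b hδ hε
  obtain ⟨M, hM⟩ := exists_quadratic_threshold (ρ := ρ) hs1 (1 + k * (ρ ^ 2 / (1 - s)))
  obtain ⟨f, hf, hfb, hfδ, Ψ, hΨ, hΨb, hΨs, ⟨R, hR⟩, hfΨ⟩ :=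
    exists_marker_perturbation M hT hmarker hmdim hf₀ hf₀b hδ
  obtain ⟨C₀, hC₀⟩ : ∃ C₀ : ℕ, C₀ = k * R ^ 2 := ⟨_, rfl⟩
  obtain ⟨C₁, hC₁⟩ : ∃ C₁ : ℝ, C₁ = C₀ + (1 + k * (2 * M * (ρ + C₀))) / s := ⟨_, rfl⟩
  have hC₁' : 1 + k * (2 * M * (ρ + C₀)) ≤ s * (C₁ - C₀) := by
    rw [hC₁, add_sub_cancel_left, mul_div_cancel₀ _ hs0.ne']
  have hC₁0 : ((k * R ^ 2 : ℕ) : ℝ) ≤ C₁ := by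
    rw [hC₁, ← hC₀]
    have : 0 ≤ (1 + k * (2 * M * (ρ + C₀))) / s := by positivity
    linarith
  obtain ⟨L, hL⟩ := exists_nat_ge (ρ + C₀)
  let Λ : Finset (Fin k → ℤ) := Fintype.piFinset fun _ => Finset.Icc (-L : ℤ) L
  -- the cost of the marker `n` as seen from `z`, with weights scaled by `s`
  let K : X → (Fin k → ℤ) → ℝ := fun z n => ∑ c, (n c : ℝ) ^ 2 + s * C₁ * (1 - Ψ (T n z))
  have hK : ∀ n, Continuous fun z => K z n := fun n => by
    have := hT.cont n
    fun_prop
  let g : X → Fin D → ℝ := fun z c =>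
    g₀ z c + ∑ n ∈ Λ, gapWeight Λ (K z) n * (G (-n) (T n z) c - g₀ z c)
  have hgc : Continuous g := by
    refine continuous_pi fun c => ?_
    have h1 : Continuous fun z => g₀ z c := (continuous_apply c).comp hg₀
    refine h1.add (continuous_finsetSum _ fun n _ => ?_)
    refine Continuous.mul ?_ (((continuous_apply c).comp ((hG (-n)).comp (hT.cont n))).sub h1)
    unfold gapWeight
    exact continuous_const.max (continuous_const.sub (continuous_finsetSum _ fun m _ =>
      continuous_const.max (continuous_const.sub ((hK m).sub (hK n)))))
  have hgb : ∀ z c, g z c ∈ Icc (0 : ℝ) 1 ∧ |g z c - g₀ z c| < δ := fun z c =>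
    bump_bounds (fun n _ => gapWeight_nonneg n) (fun n _ => gapWeight_le_one n) gapWeight_unique
      (hg₀b z c) (fun n _ => hGb _ _ c) hδ fun n _ => by
        have := hGδ (-n) (T n z) c
        rwa [hT.neg_apply] at this
  refine ⟨f, g, hf, hfb, hfδ, hgc, fun z c => (hgb z c).1, fun z c => (hgb z c).2,
    fun x y hxy hxy' => ?_⟩
  have hΨxy : ∀ n, Ψ (T n x) = Ψ (T n y) := fun n =>
    hfΨ _ _ fun m => by rw [← hT.map_add, ← hT.map_add]; exact hxy _
  have hsp : ∀ n m, (∀ c, |m c - n c| ≤ (M : ℤ)) → 0 < Ψ (T n x) → 0 < Ψ (T m x) → m = n := by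
    intro n m hmn h h'
    have := hΨs (T n x) (m - n) hmn h (by rwa [← hT.map_add, sub_add_cancel])
    exact sub_eq_zero.1 this
  obtain ⟨n, hn, hmin⟩ :=
    exists_weighted_nearest (ψ := fun n => Ψ (T n x)) hC₁0 (fun n => hΨb _) (hR x)
  rw [← hC₀] at hn
  have hnb : ∀ c, |(n c : ℝ)| ≤ C₀ := by
    intro c
    have h1 : (n c : ℝ) ^ 2 ≤ C₀ := by
      have h2 : (n c : ℝ) ^ 2 ≤ ∑ c, (n c : ℝ) ^ 2 :=
        Finset.single_le_sum (f := fun c => (n c : ℝ) ^ 2) (fun _ _ => sq_nonneg _)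
          (Finset.mem_univ c)
      have h3 : 0 ≤ C₁ * (1 - Ψ (T n x)) :=
        mul_nonneg (le_trans (by positivity) hC₁0) (by linarith [(hΨb (T n x)).2])
      linarith
    have h2 : n c ^ 2 ≤ (C₀ : ℤ) := by exact_mod_cast h1
    have h3 : |n c| ≤ (C₀ : ℤ) := by
      rw [abs_le]
      constructor <;> nlinarith
    exact_mod_cast h3
  -- the second map reads off the code word of `T n z` around the point `(1 - s) n`
  have key : ∀ z, (∀ m, Ψ (T m z) = Ψ (T m x)) → ∀ i : Fin k → ℤ,
      (∀ c, |(i c : ℝ) + s * n c| ≤ ρ) → g (T (n + i) z) = G i (T n z) := by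
    intro z hz i hi
    have hiΛ : -i ∈ Λ := by
      rw [Fintype.mem_piFinset]
      intro c
      have h3 : |s * (n c : ℝ)| ≤ C₀ := by
        rw [abs_mul, abs_of_pos hs0]
        have := hnb c
        nlinarith [abs_nonneg (n c : ℝ)]
      have h4 := hi c
      have h5 : |(i c : ℝ)| ≤ L := by
        rw [abs_le] at h3 h4 ⊢
        constructor <;> linarith
      have h6 : |i c| ≤ (L : ℤ) := by exact_mod_cast h5
      rw [abs_le] at h6
      rw [Pi.neg_apply, Finset.mem_Icc]
      constructor <;> linarith
    have hw : gapWeight Λ (K (T (n + i) z)) (-i) = 1 := by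
      refine gapWeight_eq_one fun m hm => ?_
      have hne : m + (n + i) ≠ n := fun h => hm (by
        rw [eq_neg_iff_add_eq_zero]
        have h2 : m + i + n = 0 + n := by rw [zero_add, ← add_right_comm, add_assoc m n i, h]
        exact add_right_cancel h2)
      have := gap_of_nearest hs0 hs1 hρ hM hC₁' (ψ := fun n => Ψ (T n x)) (fun n => hΨb _) hsp hn
        hmin hnb hi hne
      have e1 : Ψ (T m (T (n + i) z)) = Ψ (T (m + (n + i)) x) := by rw [← hT.map_add, hz]
      have e2 : Ψ (T (-i) (T (n + i) z)) = Ψ (T n x) := by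
        rw [← hT.map_add, neg_add_cancel_comm_assoc, hz]
      simp only [K, e1, e2]
      simpa using this
    ext c
    have := bump_eq (Λ := Λ) (α := gapWeight Λ (K (T (n + i) z)))
      (g := fun m => G (-m) (T m (T (n + i) z)) c) (f := g₀ (T (n + i) z) c)
      (fun n _ => gapWeight_nonneg n) gapWeight_unique hiΛ hw
    refine this.trans ?_
    simp only [neg_neg]
    rw [← hT.map_add, neg_add_cancel_comm_assoc]
  have hG' := hGi (-n) (T n x) (T n y) fun i hi => by
    have hi' : ∀ c, |(i c : ℝ) + s * n c| ≤ ρ := fun c => by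
      have := hi c
      rw [Pi.neg_apply] at this
      push_cast at this
      rwa [mul_neg, sub_neg_eq_add] at this
    rw [← key x (fun _ => rfl) i hi', ← key y (fun m => (hΨxy m).symm) i hi', hxy']
  rwa [hT.neg_apply, hT.neg_apply] at hG'

/-! ### The Baire category argument -/

/-- The functions `f` for which any two points in the same fiber of the orbit map `I_f` are at
distance less than `ε`. -/
def epsSeparating {k : ℕ} {X Y : Type*} [MetricSpace X] [TopologicalSpace Y]
    (T : (Fin k → ℤ) → X → X) (ε : ℝ) : Set C(X, Y) :=
  {f | ∀ x y, (∀ n, f (T n x) = f (T n y)) → dist x y < ε}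

theorem isOpen_epsSeparating {k : ℕ} {X Y : Type*} [MetricSpace X] [CompactSpace X]
    [TopologicalSpace Y] [T2Space Y] {T : (Fin k → ℤ) → X → X} (hT : IsZkAction T) (ε : ℝ) :
    IsOpen (epsSeparating T ε : Set C(X, Y)) := by
  have hcl : IsClosed {p : C(X, Y) × (X × X) |
      (∀ n, p.1 (T n p.2.1) = p.1 (T n p.2.2)) ∧ ε ≤ dist p.2.1 p.2.2} := by
    refine IsClosed.and ?_ (isClosed_le (by fun_prop) (by fun_prop))
    simp only [Set.ofPred_forall]
    refine isClosed_iInter fun n => ?_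
    have := hT.cont n
    exact isClosed_eq (by fun_prop) (by fun_prop)
  have h := isClosedMap_fst_of_compactSpace _ hcl
  rw [← isClosed_compl_iff]
  convert h using 1
  ext f
  simp [epsSeparating]

/-- By compactness `I_f` is an embedding as soon as it is injective, that is, `ε`-separating for all
`ε = 1 / (m + 1)`. -/
theorem isEmbedding_orbitMap_iff {k : ℕ} {X Y : Type*} [MetricSpace X] [CompactSpace X]
    [TopologicalSpace Y] [T2Space Y] {T : (Fin k → ℤ) → X → X} (hT : IsZkAction T) (f : C(X, Y)) :
    Topology.IsEmbedding (fun x : X => ((fun n => f (T n x)) : (Fin k → ℤ) → Y)) ↔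
      f ∈ ⋂ m : ℕ, (epsSeparating T (1 / ((m : ℝ) + 1)) : Set C(X, Y)) := by
  rw [mem_iInter]
  constructor
  · intro h m x y hxy
    rw [h.injective (funext hxy), dist_self]
    positivity
  · intro h
    have hc : Continuous fun x : X => ((fun n => f (T n x)) : (Fin k → ℤ) → Y) :=
      continuous_pi fun n => f.continuous.comp (hT.cont n)
    refine (hc.isClosedEmbedding fun x y hxy => ?_).isEmbedding
    by_contra hne
    obtain ⟨m, hm⟩ := exists_nat_one_div_lt (dist_pos.2 hne)
    exact lt_asymm hm (h m x y fun n => congrFun hxy n)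

theorem dense_epsSeparating {k D : ℕ} (hk : 1 ≤ k) {X : Type*} [MetricSpace X]
    [CompactSpace X] {T : (Fin k → ℤ) → X → X} (hT : IsZkAction T) (hmarker : MarkerProperty T)
    (hmdim : mdim X T < (D : ℝ≥0∞) / 2 ^ (k + 1)) {ε : ℝ} (hε : 0 < ε) :
    Dense (epsSeparating T ε : Set C(X, Fin (2 * D) → Set.Icc (0 : ℝ) 1)) := by
  rw [Metric.dense_iff]
  intro h δ hδ
  -- the two blocks of `D` coordinates
  let e : Fin D ⊕ Fin D ≃ Fin (2 * D) := finSumFinEquiv.trans (finCongr (two_mul D).symm)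
  have hcont : ∀ c, Continuous fun x => ((h x c : Set.Icc (0 : ℝ) 1) : ℝ) := fun c =>
    continuous_subtype_val.comp ((continuous_apply c).comp h.continuous)
  obtain ⟨f, g, hf, hfb, hfδ, hg, hgb, hgδ, hsep⟩ := exists_pair_perturbation hk hT hmarker hmdim
    (f₀ := fun x c => h x (e (Sum.inl c))) (g₀ := fun x c => h x (e (Sum.inr c)))
    (continuous_pi fun c => hcont _) (fun x c => (h x _).2)
    (continuous_pi fun c => hcont _) (fun x c => (h x _).2) hδ hε
  let F : X → Fin D ⊕ Fin D → Set.Icc (0 : ℝ) 1 := fun x c =>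
    Sum.elim (fun c => (⟨f x c, hfb x c⟩ : Set.Icc (0 : ℝ) 1)) (fun c => ⟨g x c, hgb x c⟩) c
  have hF : Continuous fun x => fun c => F x (e.symm c) := by
    refine continuous_pi fun c => ?_
    rcases e.symm c with c | c
    · exact ((continuous_apply c).comp hf).subtype_mk _
    · exact ((continuous_apply c).comp hg).subtype_mk _
  refine ⟨⟨_, hF⟩, ?_, fun x y hxy => ?_⟩
  · rw [Metric.mem_ball, ContinuousMap.dist_lt_iff hδ]
    intro x
    rw [dist_pi_lt_iff hδ]
    intro c
    obtain ⟨c, rfl⟩ := e.surjective c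
    rw [Subtype.dist_eq, Real.dist_eq, ContinuousMap.coe_mk, e.symm_apply_apply]
    rcases c with c | c
    · exact hfδ x c
    · exact hgδ x c
  · refine hsep x y (fun n => ?_) (fun n => ?_)
    · ext c
      have := congrArg Subtype.val (congrFun (hxy n) (e (Sum.inl c)))
      simpa [F] using this
    · ext c
      have := congrArg Subtype.val (congrFun (hxy n) (e (Sum.inr c)))
      simpa [F] using this

/-- **Theorem.** If a `ℤ^k`-system with the marker property satisfies
`mdim(X) < D/2^{k+1}`, then the set of `f ∈ C(X,[0,1]^{2D})` for which `I_f`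
is a topological embedding is a dense `G_δ` subset of `C(X,[0,1]^{2D})`. -/
theorem stmt_17 (k D : ℕ) (hk : 1 ≤ k) (hD : 1 ≤ D)
    (X : Type*) [MetricSpace X] [CompactSpace X]
    (T : (Fin k → ℤ) → X → X) (hT : IsZkAction T) (hmarker : MarkerProperty T)
    (hmdim : mdim X T < (D : ℝ≥0∞) / 2 ^ (k + 1)) :
    Dense {f : C(X, Fin (2 * D) → Set.Icc (0 : ℝ) 1) |
        Topology.IsEmbedding (fun x : X =>
          ((fun n => f (T n x)) : (Fin k → ℤ) → Fin (2 * D) → Set.Icc (0 : ℝ) 1))} ∧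
    IsGδ {f : C(X, Fin (2 * D) → Set.Icc (0 : ℝ) 1) |
        Topology.IsEmbedding (fun x : X =>
          ((fun n => f (T n x)) : (Fin k → ℤ) → Fin (2 * D) → Set.Icc (0 : ℝ) 1))} := by
  have heq : {f : C(X, Fin (2 * D) → Set.Icc (0 : ℝ) 1) |
      Topology.IsEmbedding (fun x : X =>
        ((fun n => f (T n x)) : (Fin k → ℤ) → Fin (2 * D) → Set.Icc (0 : ℝ) 1))} =
      ⋂ m : ℕ, epsSeparating T (1 / ((m : ℝ) + 1)) :=
    Set.ext fun f => isEmbedding_orbitMap_iff hT f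
  rw [heq]
  exact ⟨dense_iInter_of_isOpen (fun m => isOpen_epsSeparating hT _)
      fun m => dense_epsSeparating hk hT hmarker hmdim (by positivity),
    IsGδ.iInter_of_isOpen fun m => isOpen_epsSeparating hT _⟩
end

section
/- Let V be a finite-dimensional real vector space with dim V = m ≥ 1, let A be a finite set, and let n ≥ 1. Let M be an n × (nm+1) matrix with entries in A such that no value of A appears twice in any single row or in any single column of M. Then for almost every family (u_a)_{a∈A} ∈ V^A (with respect to a Haar/Lebesgue measure on the finite-dimensional space V^A), the nm+1 columns of the matrix (u_{M_{ij}})_{1≤i≤n, 1≤j≤nm+1}, i.e. the vectors (u_{M_{1j}}, …, u_{M_{nj}}) ∈ V^n for j = 1, …, nm+1, form an affinely independent family. -/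
/-!
In coordinates on `V`, the column `j` is a vector of `n * m` real variables: the row `(i, c)` holds
the variable `x (M i j, c)`. This array, with `n * m` rows and `n * m + 1` columns, again has no
repeated entry in any row or column, so it suffices to treat `V = ℝ`.

For real variables, `ae_generic` shows by induction on the number of rows that if a set `T` of
columns has at most one element more than a set `S` of rows, then for almost every `x` the columns
in `T`, restricted to `S`, are affinely independent. Fix an entry `a` occurring in `S × T`, and
delete all rows and columns of `S × T` that contain it. As `a` occurs at most once in each row and
column, the same number of rows and columns disappears, and the smaller array is generic for almost
every `x` by induction. For such an `x`, let only the coordinate `x a = t` vary. An affine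
dependence `l` between the columns then satisfies `t • P l + Q l = 0`, where the linear maps `P` and
`Q` do not depend on `t`: the rows containing `a` have leading term `t * l j`, and the other rows do
not involve `t`. The map `P` is injective precisely because the smaller array is generic, so with a
left inverse `L` of `P` a nonzero `l` is an eigenvector of `L ∘ Q` of eigenvalue `-t`. This happens
for finitely many `t` only (`exists_finite_bad`), and a Fubini argument in the direction `a` gives
the claim for almost every `x`.
-/

open MeasureTheory

set_option synthInstance.maxHeartbeats 1000000

/-- The columns `j ∈ T` of the array `x (M i j)`, restricted to the rows `i ∈ S`, are affinely
independent. An affine dependence is encoded as a function on all columns vanishing outside `T`. -/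
def Generic {R C B : Type*} [Fintype C] (M : R → C → B) (x : B → ℝ) (S : Finset R)
    (T : Finset C) : Prop :=
  ∀ l : C → ℝ, (∀ j, j ∉ T → l j = 0) → (∀ i ∈ S, ∑ j, l j * x (M i j) = 0) →
    ∑ j, l j = 0 → l = 0

lemma isOpen_generic {R C B : Type*} [Fintype R] [Fintype C] [Fintype B] (M : R → C → B)
    (S : Finset R) (T : Finset C) : IsOpen {x : B → ℝ | Generic M x S T} := by
  classical
  -- The three components encode the equations of the rows in `S`, the vanishing of the sum of the
  -- coefficients, and the vanishing of the coefficients outside `T`.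
  let f : (B → ℝ) → C → (R → ℝ) × ℝ × (C → ℝ) := fun x j =>
    (fun i => if i ∈ S then x (M i j) else 0, 1, Pi.single j (if j ∈ T then 0 else 1))
  have hf : Continuous f := by
    refine continuous_pi fun j => Continuous.prodMk (continuous_pi fun i => ?_) continuous_const
    by_cases h : i ∈ S
    · simpa [h] using continuous_apply (M i j)
    · simpa [h] using continuous_const
  have key : {x : B → ℝ | Generic M x S T} = f ⁻¹' {p | LinearIndependent ℝ p} := by
    ext x
    simp only [Set.mem_ofPred_eq, Set.mem_preimage, Fintype.linearIndependent_iff, Generic]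
    refine forall_congr' fun l => ?_
    have h : ∑ j, l j • f x j = 0 ↔ (∀ i ∈ S, ∑ j, l j * x (M i j) = 0) ∧ ∑ j, l j = 0 ∧
        ∀ j, j ∉ T → l j = 0 := by
      simp only [f, Prod.ext_iff, Prod.fst_sum, Prod.snd_sum, Prod.smul_fst, Prod.smul_snd,
        Prod.fst_zero, Prod.snd_zero, funext_iff, Finset.sum_apply, Pi.smul_apply, smul_eq_mul,
        mul_one, Pi.zero_apply, mul_ite, mul_zero]
      refine and_congr (forall_congr' fun i => ?_) (and_congr Iff.rfl (forall_congr' fun j => ?_))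
      · by_cases hi : i ∈ S <;> simp [hi]
      · simp [Pi.single_apply]
    rw [h, funext_iff]
    simp only [Pi.zero_apply]
    tauto
  rw [key]
  exact isOpen_setOfPred_linearIndependent.preimage hf

/-- A pencil `t • p + q` of families whose leading term `p` is linearly independent is linearly
independent for all but finitely many `t`. -/
lemma exists_finite_bad {C E : Type*} [Fintype C] [AddCommGroup E] [Module ℝ E] (p q : C → E)
    (hp : LinearIndependent ℝ p) :
    ∃ F : Set ℝ, F.Finite ∧ ∀ t ∉ F, ∀ l : C → ℝ, ∑ j, l j • (t • p j + q j) = 0 → l = 0 := by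
  obtain ⟨L, hL⟩ := (Fintype.linearCombination ℝ p).exists_leftInverse_of_injective
    (LinearMap.ker_eq_bot.2 (hp.fintypeLinearCombination_injective))
  let K : Module.End ℝ (C → ℝ) := L ∘ₗ Fintype.linearCombination ℝ q
  refine ⟨(fun t => -t) ⁻¹' {c | K.HasEigenvalue c},
    (Module.End.finite_hasEigenvalue K).preimage neg_injective.injOn, fun t ht l hl => ?_⟩
  by_contra hne
  apply ht
  have h1 : t • Fintype.linearCombination ℝ p l + Fintype.linearCombination ℝ q l = 0 := by
    rw [← hl]
    simp [Fintype.linearCombination_apply, Finset.smul_sum, Finset.sum_add_distrib, smul_comm t]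
  have h2 : t • l + K l = 0 := by
    have h3 := congrArg L h1
    have h4 : L (Fintype.linearCombination ℝ p l) = l := LinearMap.congr_fun hL l
    rw [map_add, map_smul, h4, map_zero] at h3
    exact h3
  refine Module.End.hasEigenvalue_of_hasEigenvector (x := l)
    ⟨Module.End.mem_eigenspace_iff.2 ?_, hne⟩
  rw [neg_smul]
  exact (neg_eq_of_add_eq_zero_right h2).symm

/-- If the array obtained from `S × T` by deleting all rows and columns containing `a` is generic
for `y`, then `S × T` is generic for almost every modification of `y` at the coordinate `a`. -/
lemma ae_generic_single {R C B : Type*} [Fintype C] [DecidableEq B] (M : R → C → B)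
    (hrow : ∀ i, Function.Injective (M i)) (S S' : Finset R)
    (T T' : Finset C) (a : B)
    (hS' : ∀ i, i ∈ S' ↔ i ∈ S ∧ ∀ j ∈ T, M i j ≠ a)
    (hT' : ∀ j, j ∈ T' ↔ j ∈ T ∧ ∀ i ∈ S, M i j ≠ a)
    (y : B → ℝ) (hy : Generic M y S' T') :
    ∀ᵐ t : ℝ, Generic M (y + Pi.single a t) S T := by
  classical
  -- With the value `t` at `a`, the row equations become `∑ j, l j • (t • p j + q j) = 0`; the rows
  -- in `S'`, the sum and the support condition are free of `t` and enter multiplied by `t`.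
  let p : C → (R → ℝ) × ℝ × (C → ℝ) := fun j =>
    (fun i => if i ∈ S' then y (M i j) else if i ∈ S then (if M i j = a then 1 else 0) else 0,
      1, Pi.single j (if j ∈ T then 0 else 1))
  let q : C → (R → ℝ) × ℝ × (C → ℝ) := fun j =>
    (fun i => if i ∈ S' then 0 else if i ∈ S then (if M i j = a then 0 else y (M i j)) else 0, 0)
  have hp : LinearIndependent ℝ p := by
    rw [Fintype.linearIndependent_iff]
    intro l hl
    simp only [p, Prod.ext_iff, Prod.fst_sum, Prod.snd_sum, Prod.smul_fst, Prod.smul_snd,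
      Prod.fst_zero, Prod.snd_zero, funext_iff, Finset.sum_apply, Pi.smul_apply, smul_eq_mul,
      mul_one, Pi.zero_apply, mul_ite, mul_zero] at hl
    obtain ⟨hr, hs, ho⟩ := hl
    have ho' : ∀ j, j ∉ T → l j = 0 := by
      intro j hj
      have := ho j
      simpa [Pi.single_apply, hj] using this
    refine funext_iff.1 (hy l (fun j hj => ?_) (fun i hi => by simpa [hi] using hr i) hs)
    by_cases hjT : j ∈ T
    · -- The column `j` was deleted, so it has `a` in a deleted row, whose equation reads `l j = 0`.
      have : ∃ i ∈ S, M i j = a := by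
        by_contra! h
        exact hj ((hT' j).2 ⟨hjT, h⟩)
      obtain ⟨i, hi, hij⟩ := this
      have hiS' : i ∉ S' := fun h => ((hS' i).1 h).2 j hjT hij
      have h1 := hr i
      simp only [hiS', hi, if_true, if_false] at h1
      rw [Finset.sum_eq_single j] at h1
      · simpa [hij] using h1
      · intro k _ hk
        rw [if_neg]
        exact fun h => hk (hrow i (h.trans hij.symm))
      · simp
    · exact ho' j hjT
  obtain ⟨F, hF, hbad⟩ := exists_finite_bad p q hp
  have hfin : ((fun t => y a + t) ⁻¹' F).Finite := hF.preimage (add_right_injective (y a)).injOn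
  filter_upwards [hfin.countable.ae_notMem MeasureTheory.volume] with t ht l ho hr hs
  refine hbad (y a + t) ht l ?_
  simp only [p, q, Prod.ext_iff, Prod.fst_sum, Prod.snd_sum, Prod.smul_fst, Prod.smul_snd,
    Prod.fst_zero, Prod.snd_zero, funext_iff, Finset.sum_apply, Pi.smul_apply, smul_eq_mul,
    mul_one, Pi.zero_apply, Prod.fst_add, Prod.snd_add, Pi.add_apply, add_zero]
  refine ⟨fun i => ?_, ?_, fun j => ?_⟩
  · by_cases hi' : i ∈ S'
    · obtain ⟨hi, hia⟩ := (hS' i).1 hi'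
      have h1 : ∀ j, l j * ((y a + t) * y (M i j)) =
          (y a + t) * (l j * (y + Pi.single a t : B → ℝ) (M i j)) := by
        intro j
        by_cases hj : j ∈ T
        · simp [hia j hj]
          ring
        · simp [ho j hj]
      simp only [hi', if_true, add_zero, h1, ← Finset.mul_sum, hr i hi, mul_zero]
    · by_cases hi : i ∈ S
      · refine Eq.trans ?_ (hr i hi)
        refine Finset.sum_congr rfl fun j _ => ?_
        by_cases h : M i j = a <;> simp [hi', hi, h]
      · simp [hi', hi]
  · rw [← Finset.sum_mul, hs, zero_mul]
  · refine Finset.sum_eq_zero fun k _ => ?_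
    by_cases hk : k ∈ T
    · simp [hk]
    · simp [ho k hk]

lemma ae_generic {R C B : Type*} [Fintype R] [Fintype C] [Fintype B] (M : R → C → B)
    (hrow : ∀ i, Function.Injective (M i)) (hcol : ∀ j, Function.Injective fun i => M i j)
    (S : Finset R) : ∀ T : Finset C, T.card ≤ S.card + 1 →
    ∀ᵐ x : B → ℝ, Generic M x S T := by
  classical
  induction S using Finset.strongInduction with
  | H S ih =>
  intro T hT
  by_cases hT1 : T.card ≤ 1
  · refine Filter.Eventually.of_forall fun x l ho _ hs => ?_
    funext j
    by_cases hj : j ∈ T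
    · rw [Finset.sum_eq_single j] at hs
      · exact hs
      · intro k _ hk
        exact ho k fun hkT => hk (Finset.card_le_one.1 hT1 k hkT j hj)
      · simp
    · exact ho j hj
  · obtain ⟨i₀, hi₀⟩ : S.Nonempty := Finset.card_pos.1 (by omega)
    obtain ⟨j₀, hj₀⟩ : T.Nonempty := Finset.card_pos.1 (by omega)
    let a := M i₀ j₀
    let S' := S.filter fun i => ∀ j ∈ T, M i j ≠ a
    let T' := T.filter fun j => ∀ i ∈ S, M i j ≠ a
    have hcard : (S.filter fun i => ¬ ∀ j ∈ T, M i j ≠ a).card ≤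
        (T.filter fun j => ¬ ∀ i ∈ S, M i j ≠ a).card := by
      have hex : ∀ i ∈ S.filter (fun i => ¬ ∀ j ∈ T, M i j ≠ a), ∃ j ∈ T, M i j = a := by
        intro i hi
        have := (Finset.mem_filter.1 hi).2
        push Not at this
        exact this
      have : Nonempty C := ⟨j₀⟩
      choose! g hg using hex
      refine Finset.card_le_card_of_injOn g (fun i hi => ?_) (fun i hi k hk hik => ?_)
      · refine Finset.mem_coe.2 (Finset.mem_filter.2 ⟨(hg i hi).1, fun h => ?_⟩)
        exact h i (Finset.mem_filter.1 hi).1 (hg i hi).2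
      · apply hcol (g i)
        change M i (g i) = M k (g i)
        rw [(hg i hi).2, hik, (hg k hk).2]
    have hS := Finset.card_filter_add_card_filter_not (s := S) fun i => ∀ j ∈ T, M i j ≠ a
    have hT2 := Finset.card_filter_add_card_filter_not (s := T) fun j => ∀ i ∈ S, M i j ≠ a
    have hss : S' ⊂ S := by
      refine (Finset.ssubset_iff_of_subset (Finset.filter_subset _ _)).2 ⟨i₀, hi₀, fun h => ?_⟩
      exact (Finset.mem_filter.1 h).2 j₀ hj₀ rfl
    have hle : T'.card ≤ S'.card + 1 := by
      simp only [S', T']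
      omega
    have hae := ih S' hss T' hle
    -- Fubini along the lines parallel to the coordinate axis of `a`.
    refine (MeasureTheory.ae_ae_add_linearMap_mem_iff (LinearMap.single ℝ (fun _ : B => ℝ) a)
      MeasureTheory.volume MeasureTheory.volume (isOpen_generic M S T).measurableSet).1 ?_
    filter_upwards [hae] with y hy
    exact ae_generic_single M hrow S S' T T' a (fun i => Finset.mem_filter)
      (fun j => Finset.mem_filter) y hy

/-- **Lemma (generic affine independence of matrix columns).** Let `V` be an
`m`-dimensional real vector space and `M` an `n × (nm+1)` matrix with entries
in a finite set `A`, no value appearing twice in a row or in a column. For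
almost every `(u_a)_{a∈A} ∈ V^A` (with respect to a product of Haar/Lebesgue
measures), the columns `(u_{M_{1j}}, …, u_{M_{nj}}) ∈ V^n` are affinely
independent. -/
theorem stmt_18 (m n : ℕ) (hm : 1 ≤ m) (hn : 1 ≤ n)
    (V : Type*) [NormedAddCommGroup V] [NormedSpace ℝ V] [FiniteDimensional ℝ V]
    [MeasurableSpace V] [BorelSpace V]
    (hdim : Module.finrank ℝ V = m)
    (μ : Measure V) [μ.IsAddHaarMeasure] [SigmaFinite μ]
    (A : Type*) [Fintype A]
    (M : Fin n → Fin (n * m + 1) → A)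
    (hrow : ∀ i, Function.Injective (M i))
    (hcol : ∀ j, Function.Injective fun i => M i j) :
    ∀ᵐ u ∂(Measure.pi fun _ : A => μ),
      AffineIndependent ℝ
        (fun j : Fin (n * m + 1) => ((fun i => u (M i j)) : Fin n → V)) := by
  classical
  let b := Module.finBasisOfFinrankEq ℝ V hdim
  let M' : Fin n × Fin m → Fin (n * m + 1) → A × Fin m := fun r j => (M r.1 j, r.2)
  have hrow' : ∀ r, Function.Injective (M' r) := fun r j k h => hrow r.1 (Prod.ext_iff.1 h).1
  have hcol' : ∀ j, Function.Injective fun r => M' r j := by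
    rintro j ⟨i, c⟩ ⟨k, d⟩ h
    obtain ⟨h1, h2⟩ := Prod.ext_iff.1 h
    exact Prod.ext (hcol j h1) h2
  have hae := ae_generic M' hrow' hcol' Finset.univ Finset.univ (by simp)
  -- The coordinate map `V^A → ℝ^(A × Fin m)`.
  let Φ : (A → V) →ₗ[ℝ] (A × Fin m → ℝ) :=
    LinearMap.pi fun r => b.coord r.2 ∘ₗ LinearMap.proj r.1
  have hΦ : Function.Surjective Φ := by
    intro x
    refine ⟨fun a => b.equivFun.symm fun c => x (a, c), ?_⟩
    funext r
    change b.equivFun (b.equivFun.symm fun c => x (r.1, c)) r.2 = x r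
    rw [LinearEquiv.apply_symm_apply]
  have hae2 := (MeasureTheory.ae_comp_linearMap_mem_iff Φ (Measure.pi fun _ : A => μ)
    MeasureTheory.volume hΦ (isOpen_generic M' Finset.univ Finset.univ).measurableSet).2 hae
  filter_upwards [hae2] with u hu
  rw [affineIndependent_iff]
  intro s w hw hsum j hj
  let l : Fin (n * m + 1) → ℝ := fun j => if j ∈ s then w j else 0
  have hl : l = 0 := by
    refine hu l (by simp) (fun r _ => ?_) (by simpa [l] using hw)
    have h1 := congrArg (b.coord r.2) (congrFun hsum r.1)
    rw [Finset.sum_apply, map_sum] at h1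
    simpa [l, Φ, M'] using h1
  simpa [l, hj] using congrFun hl j
end

section
/- Let k ≥ 1, let V be a finite-dimensional real vector space, and let s ≥ 1 and 1 ≤ n ≤ N be integers; write [N] = {0,1,…,N−1}^k, [n] = {0,…,n−1}^k and [N−n+1] = {0,…,N−n}^k ⊆ ℤ^k. Then for almost every (u_1,…,u_s) ∈ (V^{[N]})^s (with respect to a Haar/Lebesgue measure on this finite-dimensional space) the following holds: whenever one chooses at most n^k·(dim V) + 1 pairwise distinct vectors in V^{[n]} from the family u_a|_{b+[n]} (1 ≤ a ≤ s, b ∈ [N−n+1]), these vectors are affinely independent. -/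
/-!
Since the chosen vectors are distinct, so are the indices `(a, b)` they come from, and there are
finitely many choices; hence it suffices to treat a fixed family of `m + 1` distinct index pairs,
`m ≤ n ^ k * dim V`. Pick `m` of the scalar coordinates `(i, l)` of `V^{[n]}` (a site `i ∈ [n]` and
a basis vector `l` of `V`). The vectors are affinely independent as soon as the square matrix with
rows `(1, (u_a(b + i))_l)` is invertible (`affMatrix`, `affineIndependent_of_det_ne_zero`).

Sort the rows by `(a, b)` and the columns by `(l, i)`, lexicographically. As the lexicographic order
is compatible with addition, the scalar variable in the lower right corner, the `l`-th coordinate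
of `u_a` at the site `b + i`, occurs nowhere else in the matrix (`site_eq_imp`), and the same holds
for all leading blocks. The determinant of a leading block is therefore affine in its corner
variable, with slope the previous leading minor. By induction this minor is almost everywhere
nonzero, so that almost every line in the direction of the corner variable meets the zero set of
the determinant in a single point, and the zero set is null by Fubini
(`ae_det_affMatrix_ne_zero`). The induction starts at the `1 × 1` matrix `(1)`.
-/

open MeasureTheory

set_option synthInstance.maxHeartbeats 1000000

/-- The restriction `u|_{b+[n]} ∈ V^{[n]}` of `u ∈ V^{[N]}`, for a translation
vector `b ∈ [N-n+1] = {0,…,N-n}^k`. -/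
def blockRestrict {k n N : ℕ} {V : Type*} (hnN : n ≤ N)
    (u : (Fin k → Fin N) → V) (b : Fin k → Fin (N - n + 1)) :
    (Fin k → Fin n) → V :=
  fun i => u fun t => ⟨(b t : ℕ) + (i t : ℕ), by
    have h1 := (b t).isLt
    have h2 := (i t).isLt
    omega⟩

/-- Adding `t` to the lower right entry of a matrix adds `t` times the complementary minor to its
determinant. -/
theorem det_add_single {m : ℕ} (A B : Matrix (Fin (m+1)) (Fin (m+1)) ℝ) (t : ℝ)
    (h : ∀ i j, B i j = A i j + if i = Fin.last m ∧ j = Fin.last m then t else 0) :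
    B.det = A.det + t * (A.submatrix Fin.castSucc Fin.castSucc).det := by
  have hB : B = A.updateRow (Fin.last m) (A (Fin.last m) + t • Pi.single (Fin.last m) 1) := by
    ext i j
    rw [h]
    by_cases hi : i = Fin.last m
    · subst hi
      by_cases hj : j = Fin.last m <;> simp [hj]
    · simp [hi]
  rw [hB, Matrix.det_updateRow_add, Matrix.det_updateRow_smul, Matrix.updateRow_eq_self,
    ← Matrix.adjugate_apply, Matrix.adjugate_fin_succ_eq_det_submatrix]
  simp [← two_mul]

/-- The matrix whose `j`-th row is `(1, φ j 0 u, …, φ j (m - 1) u)`. Its invertibility expresses the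
affine independence of the `m + 1` points `(φ j 0 u, …, φ j (m - 1) u)` of `ℝ^m`. -/
def affMatrix {E : Type*} [AddCommGroup E] [Module ℝ E] {m : ℕ}
    (φ : Fin (m + 1) → Fin m → E →ₗ[ℝ] ℝ) (u : E) : Matrix (Fin (m + 1)) (Fin (m + 1)) ℝ :=
  Matrix.of fun j => Fin.cons 1 fun i => φ j i u

/-- If, for each `p`, some direction `e` moves only the lower right entry of the leading
`(p + 2) × (p + 2)` block of `affMatrix φ u`, then `affMatrix φ u` is invertible for almost every
`u`: along a line in direction `e` the determinant of that block is an affine function whose slope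
is the preceding leading minor. -/
theorem ae_det_affMatrix_ne_zero {E : Type*} [NormedAddCommGroup E] [NormedSpace ℝ E]
    [FiniteDimensional ℝ E] [MeasurableSpace E] [BorelSpace E]
    (ν : Measure E) [ν.IsAddHaarMeasure] {m : ℕ}
    (φ : Fin (m + 1) → Fin m → E →ₗ[ℝ] ℝ)
    (H : ∀ p : Fin m, ∃ e : E, ∀ j ≤ p.succ, ∀ i ≤ p,
      φ j i e = if j = p.succ ∧ i = p then 1 else 0) :
    ∀ᵐ u ∂ν, (affMatrix φ u).det ≠ 0 := by
  have hcont : ∀ {l : ℕ} (ψ : Fin (l + 1) → Fin l → E →ₗ[ℝ] ℝ),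
      Continuous fun u => (affMatrix ψ u).det := by
    intro l ψ
    refine Continuous.matrix_det (continuous_matrix fun j i => ?_)
    refine Fin.cases ?_ (fun i => ?_) i
    · simpa [affMatrix] using continuous_const
    · simpa [affMatrix] using (ψ j i).continuous_of_finiteDimensional
  induction m with
  | zero => simp [affMatrix]
  | succ m ih =>
    set φ' : Fin (m + 1) → Fin m → E →ₗ[ℝ] ℝ := fun j i => φ j.castSucc i.castSucc with hφ'
    have h1 : ∀ᵐ u ∂ν, (affMatrix φ' u).det ≠ 0 := by
      refine ih φ' fun p => ?_
      obtain ⟨e, he⟩ := H p.castSucc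
      refine ⟨e, fun j hj i hi => ?_⟩
      have := he j.castSucc (by simpa [← Fin.castSucc_succ] using hj) i.castSucc (by simpa using hi)
      rw [hφ', this]
      simp [← Fin.castSucc_succ]
    have hsub : ∀ u, (affMatrix φ u).submatrix Fin.castSucc Fin.castSucc = affMatrix φ' u := by
      intro u
      ext j i
      refine Fin.cases ?_ (fun i => ?_) i
      · simp [affMatrix]
      · simp [affMatrix, hφ']
    obtain ⟨e, he⟩ := H (Fin.last m)
    have hline : ∀ (u : E) (t : ℝ), (affMatrix φ (u + t • e)).det
        = (affMatrix φ u).det + t * (affMatrix φ' u).det := by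
      intro u t
      rw [← hsub]
      refine det_add_single _ _ _ fun j i => ?_
      refine Fin.cases ?_ (fun i => ?_) i
      · simp [affMatrix, (Fin.last_pos).ne]
      · have := he j (Fin.le_last _) i (Fin.le_last _)
        simp only [affMatrix, Matrix.of_apply, Fin.cons_succ, map_add, map_smul, this,
          smul_eq_mul, Fin.succ_last, mul_ite, mul_one, mul_zero]
        simp [← Fin.succ_last]
    have hline' : ∀ (u : E) (t : ℝ), affMatrix φ' (u + t • e) = affMatrix φ' u := by
      intro u t
      ext j i
      refine Fin.cases ?_ (fun i => ?_) i
      · simp [affMatrix]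
      · have := he j.castSucc (Fin.le_last _) i.castSucc (Fin.le_last _)
        simp [affMatrix, hφ', this, (Fin.castSucc_lt_last _).ne]
    -- Every line in direction `e` meets the exceptional set in at most one point.
    have h2 : ∀ᵐ u ∂ν, u ∈ {u | (affMatrix φ' u).det = 0} ∪ {u | (affMatrix φ u).det ≠ 0} := by
      refine ae_mem_of_ae_add_linearMap_mem (LinearMap.toSpanSingleton ℝ E e) volume ν ?_ ?_
      · exact (isClosed_eq (hcont φ') continuous_const).measurableSet.union
          (isOpen_ne_fun (hcont φ) continuous_const).measurableSet
      · intro u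
        by_cases hu : (affMatrix φ' u).det = 0
        · exact Filter.Eventually.of_forall fun t => Or.inl (by simpa [hline'] using hu)
        · filter_upwards [Measure.ae_ne volume
            (-(affMatrix φ u).det / (affMatrix φ' u).det)] with t ht
          refine Or.inr ?_
          simp only [LinearMap.toSpanSingleton_apply, Set.mem_ofPred_eq, hline]
          contrapose! ht
          rw [eq_div_iff hu]
          linarith
    filter_upwards [h1, h2] with u hu hu'
    exact hu'.resolve_left hu

/-- The site `b + i ∈ [N]` for `b ∈ [N - n + 1]` and `i ∈ [n]`. -/
def blockSite {k n N : ℕ} (hnN : n ≤ N) (b : Fin k → Fin (N - n + 1)) (i : Fin k → Fin n) :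
    Fin k → Fin N :=
  fun t => ⟨(b t : ℕ) + (i t : ℕ), by
    have h1 := (b t).isLt
    have h2 := (i t).isLt
    omega⟩

/-- A point of the box `[n]`, as an element of `ℕ^k` with the lexicographic order. -/
def lexSite {k n : ℕ} (b : Fin k → Fin n) : Lex (Fin k → ℕ) :=
  toLex fun t => (b t : ℕ)

theorem lexSite_injective {k n : ℕ} : Function.Injective (lexSite (k := k) (n := n)) := by
  intro b b' h
  funext t
  exact Fin.ext (congrFun (toLex.injective h) t)

/-- If `b' ≤ b` and `i' ≤ i` lexicographically, then `b' + i' = b + i` forces equality. -/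
theorem site_eq_imp {k n N : ℕ} (hnN : n ≤ N) {b b' : Fin k → Fin (N - n + 1)}
    {i i' : Fin k → Fin n} (hb : lexSite b' ≤ lexSite b) (hi : lexSite i' ≤ lexSite i)
    (h : blockSite hnN b' i' = blockSite hnN b i) : b' = b ∧ i' = i := by
  have hsum : lexSite b' + lexSite i' = lexSite b + lexSite i := by
    apply ofLex.injective
    funext t
    exact congrArg Fin.val (congrFun h t)
  have := (add_eq_add_iff_eq_and_eq hb hi).1 hsum
  exact ⟨lexSite_injective this.1, lexSite_injective this.2⟩

theorem exists_perm_strictMono {α L : Type*} [LinearOrder L] {l : ℕ} (f : Fin l → α)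
    (hf : Function.Injective f) (κ : α → L) (hκ : Function.Injective κ) :
    ∃ σ : Equiv.Perm (Fin l), StrictMono fun j => κ (f (σ j)) :=
  ⟨Tuple.sort (κ ∘ f), (Tuple.monotone_sort (κ ∘ f)).strictMono_of_injective
    ((hκ.comp hf).comp (Equiv.injective _))⟩

/-- Affine independence of vectors `v j` can be tested on the matrix of the values of `m` linear
functionals, bordered by a column of ones. -/
theorem affineIndependent_of_det_ne_zero {E W : Type*} [AddCommGroup E] [Module ℝ E]
    [AddCommGroup W] [Module ℝ W] {m : ℕ} (φ : Fin (m + 1) → Fin m → E →ₗ[ℝ] ℝ) (u : E)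
    (v : Fin (m + 1) → W) (f : Fin m → W →ₗ[ℝ] ℝ) (hf : ∀ j i, φ j i u = f i (v j))
    (h : (affMatrix φ u).det ≠ 0) : AffineIndependent ℝ v := by
  rw [affineIndependent_iff_of_fintype]
  intro w hw hv
  rw [Finset.weightedVSub_eq_linear_combination _ hw] at hv
  refine congrFun (Matrix.eq_zero_of_vecMul_eq_zero h ?_)
  funext i
  refine Fin.cases ?_ (fun i => ?_) i
  · simpa [Matrix.vecMul, dotProduct, affMatrix] using hw
  · have := congrArg (f i) hv
    simpa [Matrix.vecMul, dotProduct, affMatrix, hf] using this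

/-- The theorem for a fixed family of distinct index pairs `(a, b)`. -/
theorem ae_affineIndependent_blockRestrict {k s n N m : ℕ}
    {V : Type*} [NormedAddCommGroup V] [NormedSpace ℝ V] [FiniteDimensional ℝ V]
    [MeasurableSpace V] [BorelSpace V]
    (μ : Measure V) [μ.IsAddHaarMeasure] [SigmaFinite μ] (hnN : n ≤ N)
    (hm : m ≤ n ^ k * Module.finrank ℝ V)
    (c : Fin (m + 1) → Fin s × (Fin k → Fin (N - n + 1))) (hc : Function.Injective c) :
    ∀ᵐ u ∂(Measure.pi fun _ : Fin s => (Measure.pi fun _ : Fin k → Fin N => μ)),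
      AffineIndependent ℝ (fun j => blockRestrict hnN (u (c j).1) (c j).2) := by
  classical
  let B := Module.finBasis ℝ V
  obtain ⟨q₀⟩ : Nonempty (Fin m ↪ (Fin k → Fin n) × Fin (Module.finrank ℝ V)) :=
    Function.Embedding.nonempty_of_card_le (by simpa using hm)
  obtain ⟨σ, hσ⟩ := exists_perm_strictMono c hc
    (fun x => (toLex (x.1, lexSite x.2) : Fin s ×ₗ Lex (Fin k → ℕ))) (by
      rintro ⟨a, b⟩ ⟨a', b'⟩ h
      have h' := Prod.ext_iff.1 (toLex.injective h)
      exact Prod.ext h'.1 (lexSite_injective h'.2))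
  obtain ⟨τ, hτ⟩ := exists_perm_strictMono q₀ q₀.injective
    (fun x => (toLex (x.2, lexSite x.1) : Fin (Module.finrank ℝ V) ×ₗ Lex (Fin k → ℕ))) (by
      rintro ⟨a, b⟩ ⟨a', b'⟩ h
      have h' := Prod.ext_iff.1 (toLex.injective h)
      exact Prod.ext (lexSite_injective h'.2) h'.1)
  let φ : Fin (m + 1) → Fin m → (Fin s → (Fin k → Fin N) → V) →ₗ[ℝ] ℝ := fun j i =>
    B.coord (q₀ (τ i)).2 ∘ₗ LinearMap.proj (blockSite hnN (c (σ j)).2 (q₀ (τ i)).1) ∘ₗ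
      LinearMap.proj (c (σ j)).1
  have key := ae_det_affMatrix_ne_zero
    (Measure.pi fun _ : Fin s => (Measure.pi fun _ : Fin k → Fin N => μ)) φ (by
      intro p
      -- The direction of the scalar variable in the corner `(p.succ, p)`.
      refine ⟨Pi.single (c (σ p.succ)).1 (Pi.single
        (blockSite hnN (c (σ p.succ)).2 (q₀ (τ p)).1) (B (q₀ (τ p)).2)), ?_⟩
      intro j hj i hi
      split_ifs with hji
      · obtain ⟨rfl, rfl⟩ := hji
        simp [φ]
      · have hj' := hσ.monotone hj
        have hi' := hτ.monotone hi
        simp only [Prod.Lex.toLex_le_toLex'] at hj' hi'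
        by_cases ha : (c (σ j)).1 = (c (σ p.succ)).1
        · by_cases hl : (q₀ (τ i)).2 = (q₀ (τ p)).2
          · by_cases hx : blockSite hnN (c (σ j)).2 (q₀ (τ i)).1
                = blockSite hnN (c (σ p.succ)).2 (q₀ (τ p)).1
            · exfalso
              obtain ⟨h1, h2⟩ := site_eq_imp hnN (hj'.2 ha) (hi'.2 hl) hx
              exact hji ⟨σ.injective (hc (Prod.ext ha h1)),
                τ.injective (q₀.injective (Prod.ext h2 hl))⟩
            · simp [φ, ha, Pi.single_eq_of_ne hx]
          · by_cases hx : blockSite hnN (c (σ j)).2 (q₀ (τ i)).1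
                = blockSite hnN (c (σ p.succ)).2 (q₀ (τ p)).1
            · simp [φ, ha, hx, Finsupp.single_eq_of_ne hl]
            · simp [φ, ha, Pi.single_eq_of_ne hx]
        · simp [φ, Pi.single_eq_of_ne ha])
  filter_upwards [key] with u hu
  rw [← affineIndependent_equiv σ]
  exact affineIndependent_of_det_ne_zero φ u _
    (fun i => B.coord (q₀ (τ i)).2 ∘ₗ LinearMap.proj (q₀ (τ i)).1) (fun _ _ => rfl) hu

/-- **Lemma.** For almost every `(u_1,…,u_s) ∈ (V^{[N]})^s`, any at most
`n^k·dim V + 1` pairwise-distinct vectors chosen among the restrictions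
`u_a|_{b+[n]}` (`1 ≤ a ≤ s`, `b ∈ [N-n+1]`) are affinely independent. -/
theorem stmt_19 (k : ℕ) (hk : 1 ≤ k)
    (V : Type*) [NormedAddCommGroup V] [NormedSpace ℝ V] [FiniteDimensional ℝ V]
    [MeasurableSpace V] [BorelSpace V]
    (μ : Measure V) [μ.IsAddHaarMeasure] [SigmaFinite μ]
    (s n N : ℕ) (hs : 1 ≤ s) (hn : 1 ≤ n) (hnN : n ≤ N) :
    ∀ᵐ u ∂(Measure.pi fun _ : Fin s =>
        (Measure.pi fun _ : Fin k → Fin N => μ)),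
      ∀ r : ℕ, r ≤ n ^ k * Module.finrank ℝ V + 1 →
        ∀ c : Fin r → Fin s × (Fin k → Fin (N - n + 1)),
          Function.Injective
            (fun j => blockRestrict hnN (u (c j).1) (c j).2) →
          AffineIndependent ℝ
            (fun j => blockRestrict hnN (u (c j).1) (c j).2) := by
  simp only [ae_all_iff]
  intro r hr c
  obtain _ | m := r
  · exact Filter.Eventually.of_forall fun u _ => affineIndependent_of_subsingleton ℝ _
  by_cases hc : Function.Injective c
  · filter_upwards [ae_affineIndependent_blockRestrict μ hnN (by omega) c hc] with u hu _
    exact hu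
  · refine Filter.Eventually.of_forall fun u hu => absurd (fun x y hxy => hu ?_) hc
    simp only [hxy]
end
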